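/- arXiv:math/0609849 — 2 statements merged into one kernel-verified Lean document; each statement's English description precedes it below -/
import Mathlib

section
/- For every pair of exponents (q,r) with 2 < q ≤ ∞ and 1/q + 1/r = 1/2, there exists a constant C_{q,r} > 0 such that for all f ∈ L²(ℝ²) one has ‖e^{itΔ} f‖_{L^q_t L^r_x(ℝ×ℝ²)} ≤ C_{q,r} ‖f‖_{L²(ℝ²)}. -/
open MeasureTheory Complex FourierTransform RealInnerProductSpace SchwartzMap
open scoped ENNReal

noncomputable section

/-- The Euclidean plane `ℝ²`. -/
abbrev E2 := EuclideanSpace ℝ (Fin 2)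

/-- `φ` is a `C^∞_0(ℝ²)` symbol: smooth and compactly supported. -/
def IsCinfc (φ : E2 → ℂ) : Prop := ContDiff ℝ (⊤ : ℕ∞) φ ∧ HasCompactSupport φ

/-- The convolution kernel of `e^{itΔ} P`, where `P` is the Fourier multiplier with symbol `φ`:
`K_t(z) = ∫ φ(ξ) e^{-4π² i t |ξ|²} e^{2πi z·ξ} dξ`. -/
def schrodingerKernel (φ : E2 → ℂ) (t : ℝ) (z : E2) : ℂ :=
  ∫ ξ : E2, φ ξ *
    Complex.exp (Complex.I *
      ((2 * Real.pi * ⟪z, ξ⟫ - 4 * Real.pi ^ 2 * t * ‖ξ‖ ^ 2 : ℝ) : ℂ))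

/-- `e^{itΔ} P f (x)`, realized for `f ∈ L²(ℝ²)` as the convolution of `f` with the
(rapidly decreasing) kernel of `e^{itΔ} P`. -/
def schrodingerProp (φ : E2 → ℂ) (t : ℝ) (f : E2 → ℂ) (x : E2) : ℂ :=
  ∫ y : E2, schrodingerKernel φ t (x - y) * f y

/-- The mixed norm `‖u‖_{L^q_t L^r_x(ℝ×ℝ²)}`, with the usual modification when `q = ∞`. -/
def mixedNorm (q r : ℝ≥0∞) (u : ℝ → E2 → ℂ) : ℝ≥0∞ :=
  if q = ⊤ then essSup (fun t => eLpNorm (u t) r volume) volume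
  else (∫⁻ t : ℝ, (eLpNorm (u t) r volume) ^ q.toReal) ^ (1 / q.toReal)

section SxAux

/-- Exchange formula for the Fourier integral. -/
lemma sx_exchange {f g : E2 → ℂ} (hf : Integrable f) (hg : Integrable g) :
    ∫ ξ, 𝓕 f ξ * g ξ = ∫ x, f x * 𝓕 g x := by
  have := VectorFourier.integral_fourierIntegral_smul_eq_flip (L := innerₗ E2)
    (μ := volume) (ν := volume) (f := f) (g := g) Real.continuous_fourierChar
    (by exact continuous_inner) hf hg
  simpa using! this

lemma sx_exchange_inv {f g : E2 → ℂ} (hf : Integrable f) (hg : Integrable g) :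
    ∫ ξ, 𝓕⁻ f ξ * g ξ = ∫ x, f x * 𝓕⁻ g x := by
  have := VectorFourier.integral_fourierIntegral_smul_eq_flip (L := -innerₗ E2)
    (μ := volume) (ν := volume) (f := f) (g := g) Real.continuous_fourierChar
    (by
      have : Continuous fun p : E2 × E2 => -(inner ℝ p.1 p.2) := continuous_inner.neg
      exact this) hf hg
  have h1 : ∀ (f : E2 → ℂ), VectorFourier.fourierIntegral Real.fourierChar volume (-innerₗ E2) f
      = 𝓕⁻ f := by
    intro f
    ext x
    simp [VectorFourier.fourierIntegral, Real.fourierInv_eq]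
  have h2 : (-innerₗ E2).flip = -innerₗ E2 := by
    ext x y
    simp [real_inner_comm]
  rw [h2, h1, h1] at this
  simpa using this

lemma sx_fourier_cont {f : E2 → ℂ} (hf : Integrable f) : Continuous (𝓕 f) :=
  VectorFourier.fourierIntegral_continuous Real.continuous_fourierChar
    (by exact continuous_inner) hf

lemma sx_fourier_bound (f : E2 → ℂ) (ξ : E2) : ‖𝓕 f ξ‖ ≤ ∫ x, ‖f x‖ :=
  VectorFourier.norm_fourierIntegral_le_integral_norm _ _ _ _ _

lemma sx_fourierInv_cont {f : E2 → ℂ} (hf : Integrable f) : Continuous (𝓕⁻ f) := by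
  have : 𝓕⁻ f = fun x => 𝓕 f (-x) := by
    ext x; rw [Real.fourierInv_eq_fourier_neg]
  rw [this]
  exact (sx_fourier_cont hf).comp continuous_neg

/-- The `L²` Fourier transform agrees with the integral on `L¹ ∩ L²`. -/
lemma sx_fourier_ae {f : E2 → ℂ} (hf : Integrable f) (F : Lp ℂ 2 (volume : Measure E2))
    (hF : (F : E2 → ℂ) =ᵐ[volume] f) :
    ((𝓕 F : Lp ℂ 2 (volume : Measure E2)) : E2 → ℂ) =ᵐ[volume] 𝓕 f := by
  apply ae_eq_of_integral_contDiff_smul_eq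
  · exact (Lp.memLp _).locallyIntegrable (by norm_num)
  · exact (sx_fourier_cont hf).locallyIntegrable
  intro g g_smooth g_cpt
  have hg₁ : HasCompactSupport (Complex.ofRealCLM ∘ g) := g_cpt.comp_left rfl
  have hg₂ : ContDiff ℝ (⊤ : ℕ∞) (Complex.ofRealCLM ∘ g) := by fun_prop
  set φ := hg₁.toSchwartzMap hg₂ with hφ
  have e1 := congrArg (fun T => T φ) (Lp.fourier_toTemperedDistribution_eq F)
  simp only [TemperedDistribution.fourier_apply, Lp.toTemperedDistribution_apply] at e1
  have hφe : ∀ x, φ x = (g x : ℂ) := fun x => rfl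
  have e2 : ∫ x, g x • 𝓕 f x = ∫ x, (𝓕 φ) x • F x := by
    rw [← sub_eq_zero]
    have := sx_exchange hf (φ.integrable (μ := volume))
    calc _ = (∫ x, 𝓕 f x * φ x) - ∫ x, f x * 𝓕 (⇑φ) x := by
          congr 1
          · refine integral_congr_ae (Filter.Eventually.of_forall fun x => ?_)
            simp [hφe, mul_comm]
          · refine integral_congr_ae ?_
            filter_upwards [hF] with x hx
            simp [hx, mul_comm, SchwartzMap.fourier_coe]
      _ = 0 := by rw [this, sub_self]
  rw [e2, e1]
  refine integral_congr_ae (Filter.Eventually.of_forall fun x => ?_)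
  simp [hφe]

lemma sx_fourierInv_ae {f : E2 → ℂ} (hf : Integrable f) (F : Lp ℂ 2 (volume : Measure E2))
    (hF : (F : E2 → ℂ) =ᵐ[volume] f) :
    ((𝓕⁻ F : Lp ℂ 2 (volume : Measure E2)) : E2 → ℂ) =ᵐ[volume] 𝓕⁻ f := by
  apply ae_eq_of_integral_contDiff_smul_eq
  · exact (Lp.memLp _).locallyIntegrable (by norm_num)
  · exact (sx_fourierInv_cont hf).locallyIntegrable
  intro g g_smooth g_cpt
  have hg₁ : HasCompactSupport (Complex.ofRealCLM ∘ g) := g_cpt.comp_left rfl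
  have hg₂ : ContDiff ℝ (⊤ : ℕ∞) (Complex.ofRealCLM ∘ g) := by fun_prop
  set φ := hg₁.toSchwartzMap hg₂ with hφ
  have e1 := congrArg (fun T => T φ) (Lp.fourierInv_toTemperedDistribution_eq F)
  simp only [TemperedDistribution.fourierInv_apply, Lp.toTemperedDistribution_apply] at e1
  have hφe : ∀ x, φ x = (g x : ℂ) := fun x => rfl
  have e2 : ∫ x, g x • 𝓕⁻ f x = ∫ x, (𝓕⁻ φ) x • F x := by
    rw [← sub_eq_zero]
    have := sx_exchange_inv hf (φ.integrable (μ := volume))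
    calc _ = (∫ x, 𝓕⁻ f x * φ x) - ∫ x, f x * 𝓕⁻ (⇑φ) x := by
          congr 1
          · refine integral_congr_ae (Filter.Eventually.of_forall fun x => ?_)
            simp [hφe, mul_comm]
          · refine integral_congr_ae ?_
            filter_upwards [hF] with x hx
            simp [hx, mul_comm, SchwartzMap.fourierInv_coe]
      _ = 0 := by rw [this, sub_self]
  rw [e2, e1]
  refine integral_congr_ae (Filter.Eventually.of_forall fun x => ?_)
  simp [hφe]

/-- The Schrödinger multiplier. -/
def sxM (t : ℝ) (ξ : E2) : ℂ := cexp (I * ((-(4 * Real.pi ^ 2 * t * ‖ξ‖ ^ 2) : ℝ) : ℂ))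

lemma sxM_norm (t : ℝ) (ξ : E2) : ‖sxM t ξ‖ = 1 := by
  rw [sxM, mul_comm, Complex.norm_exp_ofReal_mul_I]

lemma sxM_cont : Continuous fun p : ℝ × E2 => sxM p.1 p.2 := by
  unfold sxM; fun_prop

lemma sxM_cont_right (t : ℝ) : Continuous (sxM t) := by
  unfold sxM; fun_prop

lemma sxM_add (s t : ℝ) (ξ : E2) : sxM s ξ * sxM t ξ = sxM (s + t) ξ := by
  rw [sxM, sxM, sxM, ← Complex.exp_add]; congr 1; push_cast; ring

lemma sxM_memLp (t : ℝ) {f : E2 → ℂ} (hf : MemLp f 2 volume) :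
    MemLp (fun ξ => sxM t ξ * f ξ) 2 volume := by
  refine hf.of_le ((sxM_cont_right t).aestronglyMeasurable.mul hf.1) ?_
  exact Filter.Eventually.of_forall fun x => by simp [sxM_norm]

/-- multiplication operator on `L²`. -/
def sxMul (t : ℝ) (f : Lp ℂ 2 (volume : Measure E2)) : Lp ℂ 2 (volume : Measure E2) :=
  (sxM_memLp t (Lp.memLp f)).toLp _

lemma sxMul_coe (t : ℝ) (f : Lp ℂ 2 (volume : Measure E2)) :
    (sxMul t f : E2 → ℂ) =ᵐ[volume] fun ξ => sxM t ξ * f ξ := MemLp.coeFn_toLp _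

lemma sxMul_isometry (t : ℝ) : Isometry (sxMul t) := by
  refine Isometry.of_dist_eq fun f g => ?_
  rw [Lp.dist_def, Lp.dist_def]
  congr 1
  refine eLpNorm_congr_norm_ae ?_
  filter_upwards [sxMul_coe t f, sxMul_coe t g] with x h1 h2
  simp [h1, h2, ← mul_sub, sxM_norm]

/-- The hypothesis of the main theorem on the propagator. -/
def SxProp (U : ℝ → (Lp ℂ 2 (volume : Measure E2) →ₗᵢ[ℂ] Lp ℂ 2 (volume : Measure E2))) : Prop :=
  ∀ (t : ℝ) (f : 𝓢(E2, ℂ)) (g : Lp ℂ 2 (volume : Measure E2)),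
      (g : E2 → ℂ) =ᵐ[volume] ⇑f →
      (U t g : E2 → ℂ) =ᵐ[volume] fun x : E2 =>
        ∫ ξ : E2, Complex.exp (Complex.I *
            ((2 * Real.pi * ⟪x, ξ⟫ - 4 * Real.pi ^ 2 * t * ‖ξ‖ ^ 2 : ℝ) : ℂ)) * 𝓕 (⇑f) ξ

variable {U : ℝ → (Lp ℂ 2 (volume : Measure E2) →ₗᵢ[ℂ] Lp ℂ 2 (volume : Measure E2))}

lemma sx_fourier_U (hU : SxProp U) (t : ℝ) (f : Lp ℂ 2 (volume : Measure E2)) :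
    (𝓕 (U t f) : Lp ℂ 2 (volume : Measure E2)) = sxMul t (𝓕 f) := by
  set p := fun f : Lp ℂ 2 (volume : Measure E2) ↦
    (𝓕 (U t f) : Lp ℂ 2 (volume : Measure E2)) = sxMul t (𝓕 f)
  apply DenseRange.induction_on (p := p)
    (SchwartzMap.denseRange_toLpCLM (p := 2) ENNReal.ofNat_ne_top) f
  · apply isClosed_eq
    · exact (Lp.fourierTransformₗᵢ E2 ℂ).continuous.comp (U t).continuous
    · exact (sxMul_isometry t).continuous.comp (Lp.fourierTransformₗᵢ E2 ℂ).continuous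
  intro f
  change (𝓕 (U t (f.toLp 2 volume)) : Lp ℂ 2 (volume : Measure E2)) = sxMul t (𝓕 (f.toLp 2 volume))
  have hfi : Integrable (𝓕 (⇑f)) (volume : Measure E2) := by
    rw [← SchwartzMap.fourier_coe]; exact (𝓕 f).integrable
  have hH : (sxMul t (𝓕 (f.toLp 2 volume)) : E2 → ℂ) =ᵐ[volume] fun ξ => sxM t ξ * 𝓕 (⇑f) ξ := by
    refine (sxMul_coe t _).trans ?_
    filter_upwards [sx_fourier_ae f.integrable (f.toLp 2 volume) (f.coeFn_toLp 2 volume)] with ξ h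
    rw [h]
  have hhi : Integrable (fun ξ => sxM t ξ * 𝓕 (⇑f) ξ) (volume : Measure E2) := by
    refine hfi.mono ((sxM_cont_right t).aestronglyMeasurable.mul hfi.1) ?_
    exact Filter.Eventually.of_forall fun x => by simp [sxM_norm]
  have key : U t (f.toLp 2 volume) = 𝓕⁻ (sxMul t (𝓕 (f.toLp 2 volume))) := by
    apply Lp.ext
    refine (hU t f _ (f.coeFn_toLp 2 volume)).trans ?_
    refine Filter.EventuallyEq.trans ?_ (sx_fourierInv_ae hhi _ hH).symm
    refine Filter.Eventually.of_forall fun x => ?_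
    simp only [Real.fourierInv_eq']
    refine integral_congr_ae (Filter.Eventually.of_forall fun ξ => ?_)
    simp only [smul_eq_mul, sxM]
    rw [← mul_assoc, ← Complex.exp_add]
    congr 2
    push_cast
    rw [real_inner_comm]
    ring
  rw [key, fourier_fourierInv_eq]

lemma sx_group (hU : SxProp U) (s t : ℝ) (f : Lp ℂ 2 (volume : Measure E2)) :
    U s (U t f) = U (s + t) f := by
  apply (Lp.fourierTransformₗᵢ E2 ℂ).injective
  change (𝓕 (U s (U t f)) : Lp ℂ 2 (volume : Measure E2)) = 𝓕 (U (s + t) f)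
  rw [sx_fourier_U hU, sx_fourier_U hU, sx_fourier_U hU]
  apply Lp.ext
  filter_upwards [sxMul_coe s (sxMul t (𝓕 f)), sxMul_coe t (𝓕 f), sxMul_coe (s + t) (𝓕 f)]
    with x h1 h2 h3
  rw [h1, h2, h3, ← mul_assoc, sxM_add]

lemma sx_zero (hU : SxProp U) (f : Lp ℂ 2 (volume : Measure E2)) : U 0 f = f := by
  apply (U 0).injective
  rw [sx_group hU, add_zero]

lemma sx_inner (hU : SxProp U) (t : ℝ) (f g : Lp ℂ 2 (volume : Measure E2)) :
    inner ℂ g (U t f) = ∫ ξ, sxM t ξ * ((𝓕 f : Lp ℂ 2 (volume : Measure E2)) ξ *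
      (starRingEnd ℂ) ((𝓕 g : Lp ℂ 2 (volume : Measure E2)) ξ)) := by
  rw [← Lp.inner_fourier_eq, sx_fourier_U hU, L2.inner_def]
  refine integral_congr_ae ?_
  filter_upwards [sxMul_coe t (𝓕 f)] with x h
  simp [h, RCLike.inner_apply, mul_assoc]

lemma sx_integrable (f g : Lp ℂ 2 (volume : Measure E2)) :
    Integrable (fun ξ => (f ξ * (starRingEnd ℂ) (g ξ))) := by
  have := L2.integrable_inner (𝕜 := ℂ) g f
  simpa [RCLike.inner_apply] using this

lemma sx_inner_adj (hU : SxProp U) (s t : ℝ) (f g : Lp ℂ 2 (volume : Measure E2)) :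
    inner ℂ (U (-s) g) (U t f) = inner ℂ g (U (s + t) f) := by
  rw [← (U s).inner_map_map, sx_group hU, sx_group hU, add_neg_cancel, sx_zero hU]

lemma sx_cont_inner (hU : SxProp U) (f g : Lp ℂ 2 (volume : Measure E2)) :
    Continuous fun t => inner ℂ g (U t f) := by
  simp_rw [sx_inner hU]
  have hi := sx_integrable (𝓕 f) (𝓕 g)
  refine continuous_of_dominated (bound := fun ξ => ‖((𝓕 f : Lp ℂ 2 (volume : Measure E2)) ξ *
      (starRingEnd ℂ) ((𝓕 g : Lp ℂ 2 (volume : Measure E2)) ξ))‖) ?_ ?_ hi.norm ?_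
  · intro t
    exact (sxM_cont_right t).aestronglyMeasurable.mul hi.1
  · intro t
    exact Filter.Eventually.of_forall fun x => by rw [norm_mul, sxM_norm, one_mul]
  · refine Filter.Eventually.of_forall fun x => ?_
    unfold sxM
    fun_prop

lemma sx_cont (hU : SxProp U) (f : Lp ℂ 2 (volume : Measure E2)) :
    Continuous fun t => U t f := by
  rw [continuous_iff_continuousAt]
  intro s
  rw [ContinuousAt, tendsto_iff_norm_sub_tendsto_zero]
  have h1 : ∀ t, ‖U t f - U s f‖ = Real.sqrt (2 * ‖f‖ ^ 2 - 2 * (inner ℂ (U s f) (U t f)).re) := by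
    intro t
    rw [← Real.sqrt_sq (norm_nonneg (U t f - U s f))]
    congr 1
    rw [@norm_sub_sq ℂ, (U t).norm_map, (U s).norm_map, inner_re_symm]
    simp; ring
  simp_rw [h1]
  have h2 : Continuous fun t => Real.sqrt (2 * ‖f‖ ^ 2 - 2 * (inner ℂ (U s f) (U t f)).re) := by
    have := sx_cont_inner hU f (U s f)
    fun_prop
  have h3 := h2.tendsto s
  convert! h3 using 2
  have : (inner ℂ (U s f) (U s f)).re = ‖f‖ ^ 2 := by
    have := @inner_self_eq_norm_sq ℂ _ _ _ _ (U s f)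
    rw [(U s).norm_map] at this
    exact this
  rw [this]; simp

lemma sx_cont_joint (hU : SxProp U) {X : Type*} [TopologicalSpace X] {a : X → ℝ}
    {F : X → Lp ℂ 2 (volume : Measure E2)}
    (ha : Continuous a) (hF : Continuous F) : Continuous fun x => U (a x) (F x) := by
  rw [continuous_iff_continuousAt]
  intro s
  rw [ContinuousAt, tendsto_iff_norm_sub_tendsto_zero]
  have h1 : Continuous fun t => ‖F t - F s‖ + ‖U (a t) (F s) - U (a s) (F s)‖ := by
    have := (sx_cont hU (F s)).comp ha
    exact ((hF.sub continuous_const).norm).add ((this.sub continuous_const).norm)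
  have h2 := h1.tendsto s
  simp only [sub_self, norm_zero, add_zero] at h2
  refine squeeze_zero (fun _ => norm_nonneg _) (fun t => ?_) h2
  calc ‖U (a t) (F t) - U (a s) (F s)‖
      = ‖U (a t) (F t - F s) + (U (a t) (F s) - U (a s) (F s))‖ := by rw [map_sub]; congr 1; abel
    _ ≤ _ := (norm_add_le _ _).trans (by rw [(U (a t)).norm_map])

lemma sx_gauss_bound {b : ℂ} (hb : 0 < b.re) (x w : E2) :
    ‖𝓕 (fun v : E2 => cexp (-b * ‖v‖ ^ 2 + 2 * Real.pi * I * ⟪x, v⟫)) w‖ ≤ Real.pi / ‖b‖ := by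
  rw [fourier_gaussian_innerProductSpace' hb]
  have h1 : ((Module.finrank ℝ E2 : ℂ) / 2) = 1 := by simp
  rw [h1, Complex.cpow_one, norm_mul, norm_div, Complex.norm_real, Real.norm_of_nonneg Real.pi_pos.le]
  refine mul_le_of_le_one_right (by positivity) ?_
  rw [Complex.norm_exp, Real.exp_le_one_iff]
  have : (-(Real.pi : ℂ) ^ 2 * (‖x - w‖ : ℂ) ^ 2 / b) = ((-(Real.pi ^ 2 * ‖x - w‖ ^ 2) : ℝ) : ℂ) * b⁻¹ := by
    push_cast; ring
  rw [this, Complex.re_ofReal_mul, Complex.inv_re]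
  have h2 : 0 ≤ b.re / Complex.normSq b := div_nonneg hb.le (Complex.normSq_nonneg _)
  have h3 : 0 ≤ (Real.pi ^ 2 * ‖x - w‖ ^ 2) := by positivity
  nlinarith

lemma sx_conj_fourier (g : E2 → ℂ) (ξ : E2) :
    (starRingEnd ℂ) (𝓕 g ξ) = 𝓕 (fun x => (starRingEnd ℂ) (g x)) (-ξ) := by
  rw [Real.fourier_eq', Real.fourier_eq', ← integral_conj]
  refine integral_congr_ae (Filter.Eventually.of_forall fun x => ?_)
  simp [← Complex.exp_conj, Complex.conj_ofNat]

lemma sx_disp_eps {b : ℂ} (hb : 0 < b.re) {f g : E2 → ℂ} (hf : Integrable f) (hg : Integrable g) :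
    ‖∫ ξ, cexp (-b * ‖ξ‖ ^ 2) * (𝓕 f ξ * (starRingEnd ℂ) (𝓕 g ξ))‖
      ≤ Real.pi / ‖b‖ * ((∫ x, ‖f x‖) * ∫ x, ‖g x‖) := by
  have hgc : Integrable (fun x => (starRingEnd ℂ) (g x)) := by
    exact (Complex.conjCLE.toContinuousLinearMap).integrable_comp hg
  have hexp : ∀ y : E2, Integrable (fun v : E2 => cexp (-b * ‖v‖ ^ 2 + 2 * Real.pi * I * ⟪y, v⟫)) :=
    fun y => GaussianFourier.integrable_cexp_neg_mul_sq_norm_add hb _ _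
  have hexp0 : Integrable (fun v : E2 => cexp (-b * ‖v‖ ^ 2)) := by
    simpa using hexp 0
  have hh : Integrable (fun ξ => cexp (-b * ‖ξ‖ ^ 2) * (starRingEnd ℂ) (𝓕 g ξ)) := by
    refine hexp0.mul_bdd (c := ∫ x, ‖g x‖) ?_ ?_
    · exact (Complex.continuous_conj.comp (sx_fourier_cont hg)).aestronglyMeasurable
    · exact Filter.Eventually.of_forall fun x => by
        rw [RCLike.norm_conj]; exact sx_fourier_bound g x
  have e1 : ∫ ξ, cexp (-b * ‖ξ‖ ^ 2) * (𝓕 f ξ * (starRingEnd ℂ) (𝓕 g ξ))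
      = ∫ y, f y * 𝓕 (fun ξ => cexp (-b * ‖ξ‖ ^ 2) * (starRingEnd ℂ) (𝓕 g ξ)) y := by
    rw [← sx_exchange hf hh]
    refine integral_congr_ae (Filter.Eventually.of_forall fun x => ?_)
    simp only; ring
  have e2 : ∀ y, 𝓕 (fun ξ => cexp (-b * ‖ξ‖ ^ 2) * (starRingEnd ℂ) (𝓕 g ξ)) y
      = ∫ x, (starRingEnd ℂ) (g x) * 𝓕 (fun v : E2 => cexp (-b * ‖v‖ ^ 2 + 2 * Real.pi * I * ⟪y, v⟫)) x := by
    intro y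
    rw [← sx_exchange hgc (hexp y), Real.fourier_eq', ← integral_neg_eq_self]
    refine integral_congr_ae (Filter.Eventually.of_forall fun x => ?_)
    simp only [sx_conj_fourier, neg_neg, norm_neg, smul_eq_mul]
    rw [← mul_assoc, ← Complex.exp_add, mul_comm]
    congr 2
    rw [inner_neg_left, real_inner_comm]
    push_cast
    ring
  have e3 : ∀ y, ‖𝓕 (fun ξ => cexp (-b * ‖ξ‖ ^ 2) * (starRingEnd ℂ) (𝓕 g ξ)) y‖
      ≤ Real.pi / ‖b‖ * ∫ x, ‖g x‖ := by
    intro y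
    rw [e2, ← integral_const_mul]
    refine norm_integral_le_of_norm_le (hg.norm.const_mul _) ?_
    refine Filter.Eventually.of_forall fun x => ?_
    rw [norm_mul, RCLike.norm_conj, mul_comm]
    exact mul_le_mul_of_nonneg_right (sx_gauss_bound hb y x) (norm_nonneg _)
  rw [e1]
  calc _ ≤ ∫ y, ‖f y‖ * (Real.pi / ‖b‖ * ∫ x, ‖g x‖) := by
        refine norm_integral_le_of_norm_le (hf.norm.mul_const _) ?_
        refine Filter.Eventually.of_forall fun x => ?_
        rw [norm_mul]
        exact mul_le_mul_of_nonneg_left (e3 x) (norm_nonneg _)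
    _ = _ := by rw [integral_mul_const]; ring

lemma sx_disp (hU : SxProp U) {t : ℝ} (ht : t ≠ 0) (f g : Lp ℂ 2 (volume : Measure E2))
    (hf : Integrable f) (hg : Integrable g) :
    ‖inner ℂ g (U t f)‖ ≤ |t|⁻¹ * ((∫ x, ‖f x‖) * ∫ x, ‖g x‖) := by
  set F := (𝓕 f : Lp ℂ 2 (volume : Measure E2))
  set G := (𝓕 g : Lp ℂ 2 (volume : Measure E2))
  have hi := sx_integrable F G
  have hlim : Filter.Tendsto (fun n : ℕ => ∫ ξ, cexp (-((1 / ((n : ℝ) + 1) : ℝ) + (4 * Real.pi ^ 2 * t : ℝ) * I) *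
      ‖ξ‖ ^ 2) * (F ξ * (starRingEnd ℂ) (G ξ))) Filter.atTop (nhds (inner ℂ g (U t f))) := by
    rw [sx_inner hU]
    refine tendsto_integral_of_dominated_convergence (fun ξ => ‖F ξ * (starRingEnd ℂ) (G ξ)‖) ?_
      hi.norm ?_ ?_
    · intro n
      refine Continuous.aestronglyMeasurable ?_ |>.mul hi.1
      fun_prop
    · intro n
      refine Filter.Eventually.of_forall fun ξ => ?_
      rw [norm_mul]
      refine mul_le_of_le_one_left (norm_nonneg _) ?_
      rw [Complex.norm_exp, Real.exp_le_one_iff]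
      have : (-((1 / ((n : ℝ) + 1) : ℝ) + (4 * Real.pi ^ 2 * t : ℝ) * I) * (‖ξ‖ : ℂ) ^ 2)
        = ((-(1 / ((n : ℝ) + 1) * ‖ξ‖ ^ 2) : ℝ) : ℂ) + ((-(4 * Real.pi ^ 2 * t * ‖ξ‖ ^ 2) : ℝ) : ℂ) * I := by
        push_cast; ring
      rw [this, Complex.add_re, Complex.ofReal_re, Complex.re_ofReal_mul, Complex.I_re, mul_zero, add_zero]
      have : 0 ≤ 1 / ((n : ℝ) + 1) * ‖ξ‖ ^ 2 := by positivity
      linarith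
    · refine Filter.Eventually.of_forall fun ξ => ?_
      refine Filter.Tendsto.mul_const _ ?_
      have hc : Continuous fun e : ℝ => cexp (-((e : ℝ) + (4 * Real.pi ^ 2 * t : ℝ) * I) * (‖ξ‖ : ℂ) ^ 2) := by
        fun_prop
      have h0 := (hc.tendsto 0).comp (tendsto_one_div_add_atTop_nhds_zero_nat (𝕜 := ℝ))
      convert! h0 using 2
      rw [sxM]
      congr 1
      push_cast; ring
  refine le_of_tendsto hlim.norm (Filter.Eventually.of_forall fun n => ?_)
  have hF := sx_fourier_ae hf f (Filter.EventuallyEq.refl _ _)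
  have hG := sx_fourier_ae hg g (Filter.EventuallyEq.refl _ _)
  set b : ℂ := ((1 / ((n : ℝ) + 1) : ℝ) + (4 * Real.pi ^ 2 * t : ℝ) * I) with hbdef
  have hbre : b.re = 1 / ((n : ℝ) + 1) := by
    rw [hbdef, Complex.add_re, Complex.ofReal_re, Complex.re_ofReal_mul, Complex.I_re, mul_zero, add_zero]
  have hbim : b.im = 4 * Real.pi ^ 2 * t := by
    rw [hbdef, Complex.add_im, Complex.ofReal_im, Complex.im_ofReal_mul, Complex.I_im, mul_one, zero_add]
  have hb : 0 < b.re := by rw [hbre]; positivity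
  have e : ∫ ξ, cexp (-b * ‖ξ‖ ^ 2) * (F ξ * (starRingEnd ℂ) (G ξ)) =
      ∫ ξ, cexp (-b * ‖ξ‖ ^ 2) * (𝓕 (f : E2 → ℂ) ξ * (starRingEnd ℂ) (𝓕 (g : E2 → ℂ) ξ)) := by
    refine integral_congr_ae ?_
    filter_upwards [hF, hG] with x h1 h2
    simp only [F, G, h1, h2]
  rw [e]
  refine (sx_disp_eps hb hf hg).trans ?_
  refine mul_le_mul_of_nonneg_right ?_ (by positivity)
  have h4 : 4 * Real.pi ^ 2 * |t| ≤ ‖b‖ := by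
    have := Complex.abs_im_le_norm b
    rw [hbim, abs_mul, abs_of_nonneg (by positivity)] at this
    exact this
  have ht' : 0 < |t| := abs_pos.mpr ht
  rw [div_le_iff₀ (norm_pos_iff.mpr (by intro h; simp [h] at hb))]
  have : Real.pi ≤ |t|⁻¹ * (4 * Real.pi ^ 2 * |t|) := by
    have : |t|⁻¹ * (4 * Real.pi ^ 2 * |t|) = 4 * Real.pi ^ 2 := by field_simp
    rw [this]; nlinarith [Real.pi_gt_three]
  exact this.trans (mul_le_mul_of_nonneg_left h4 (by positivity))

lemma sx_even (g : ℝ → ℝ≥0∞) : ∫⁻ x : ℝ, g |x| = 2 * ∫⁻ x in Set.Ioi (0 : ℝ), g x := by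
  rw [← lintegral_add_compl _ (measurableSet_Ioi (a := (0 : ℝ))), two_mul]
  congr 1
  · refine setLIntegral_congr_fun measurableSet_Ioi fun x hx => ?_
    simp only [abs_of_pos (Set.mem_Ioi.mp hx)]
  · rw [Set.compl_Ioi, ← lintegral_indicator measurableSet_Iic,
      ← (Measure.measurePreserving_neg (volume : Measure ℝ)).lintegral_comp_emb
        (MeasurableEquiv.neg ℝ).measurableEmbedding,
      setLIntegral_congr (Ioi_ae_eq_Ici (a := (0 : ℝ))), ← lintegral_indicator measurableSet_Ici]
    refine lintegral_congr fun x => ?_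
    by_cases hx : 0 ≤ x
    · simp [Set.indicator, hx, abs_of_nonneg hx]
    · simp [Set.indicator, hx]

lemma sx_near {l R : ℝ} (hl1 : l < 1) (hR : 0 < R) (s : ℝ) :
    ∫⁻ t : ℝ, (if |s - t| ≤ R then ENNReal.ofReal (|s - t| ^ (-l)) else 0)
      = 2 * ENNReal.ofReal (R ^ (1 - l) / (1 - l)) := by
  rw [lintegral_sub_left_eq_self (fun x : ℝ => if |x| ≤ R then ENNReal.ofReal (|x| ^ (-l)) else 0) s,
    sx_even (fun y : ℝ => if y ≤ R then ENNReal.ofReal (y ^ (-l)) else 0)]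
  congr 1
  have h1 : ∀ y : ℝ, (if y ≤ R then ENNReal.ofReal (y ^ (-l)) else 0)
      = (Set.Iic R).indicator (fun y => ENNReal.ofReal (y ^ (-l))) y := by
    intro y; simp [Set.indicator]
  simp_rw [h1]
  rw [lintegral_indicator measurableSet_Iic, Measure.restrict_restrict measurableSet_Iic,
    Set.Iic_inter_Ioi]
  have hInteg : IntervalIntegrable (fun x : ℝ => x ^ (-l)) volume 0 R :=
    intervalIntegral.intervalIntegrable_rpow' (by linarith)
  rw [← ofReal_integral_eq_lintegral_ofReal
    ((intervalIntegrable_iff_integrableOn_Ioc_of_le hR.le).mp hInteg)]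
  · rw [← intervalIntegral.integral_of_le hR.le, integral_rpow (Or.inl (by linarith)),
      Real.zero_rpow (by linarith), sub_zero]
    congr 2 <;> ring
  · filter_upwards [ae_restrict_mem measurableSet_Ioc] with x hx
    exact Real.rpow_nonneg hx.1.le _

lemma sx_far {R : ℝ} (hR : 0 < R) (s : ℝ) :
    ∫⁻ t : ℝ, (if |s - t| ≤ R then 0 else ENNReal.ofReal (|s - t| ^ (-2 : ℝ)))
      = 2 * ENNReal.ofReal (R⁻¹) := by
  rw [lintegral_sub_left_eq_self (fun x : ℝ => if |x| ≤ R then 0 else ENNReal.ofReal (|x| ^ (-2 : ℝ))) s,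
    sx_even (fun y : ℝ => if y ≤ R then 0 else ENNReal.ofReal (y ^ (-2 : ℝ)))]
  congr 1
  have h1 : ∀ y : ℝ, (if y ≤ R then 0 else ENNReal.ofReal (y ^ (-2 : ℝ)))
      = (Set.Ioi R).indicator (fun y => ENNReal.ofReal (y ^ (-2 : ℝ))) y := by
    intro y
    by_cases h : y ≤ R
    · simp [Set.indicator, h]
    · simp [Set.indicator, h, not_le.mp h]
  simp_rw [h1]
  rw [lintegral_indicator measurableSet_Ioi, Measure.restrict_restrict measurableSet_Ioi,
    Set.Ioi_inter_Ioi, sup_of_le_left hR.le]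
  rw [← ofReal_integral_eq_lintegral_ofReal
    (integrableOn_Ioi_rpow_of_lt (by norm_num) hR)]
  · rw [integral_Ioi_rpow_of_lt (by norm_num) hR]
    congr 1
    norm_num
    rw [Real.rpow_neg_one]
  · filter_upwards [ae_restrict_mem measurableSet_Ioi] with x hx
    exact Real.rpow_nonneg (hR.le.trans (le_of_lt hx)) _

/-- The real arithmetic of the optimization in `R`. -/
lemma sx_opt {l x n : ℝ} (hl : 0 < l) (hl1 : l < 1) (hx : 0 < x) (hn : 0 < n) :
    x * (2 * (((n / x) ^ (2 / (2 - l))) ^ (1 - l) / (1 - l)))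
      + n * (2 * ((n / x) ^ (2 / (2 - l)))⁻¹) ^ (l / 2)
      = (2 / (1 - l) + 2 ^ (l / 2)) * (n ^ (1 - l / (2 - l)) * x ^ (l / (2 - l))) := by
  have h2 : (2 - l) ≠ 0 := by linarith
  have h1 : (1 - l) ≠ 0 := by linarith
  have hnx : 0 < n / x := by positivity
  have e1 : ((n / x) ^ (2 / (2 - l))) ^ (1 - l) = n ^ (1 - l / (2 - l)) * x ^ (l / (2 - l)) / x := by
    have ha : 2 / (2 - l) * (1 - l) = 1 - l / (2 - l) := by field_simp; ring
    have hb : x ^ (l / (2 - l)) / x = (x ^ (1 - l / (2 - l)))⁻¹ := by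
      rw [← Real.rpow_neg hx.le, ← Real.rpow_sub_one hx.ne']; congr 1; ring
    rw [← Real.rpow_mul hnx.le, Real.div_rpow hn.le hx.le, mul_div_assoc, ha, hb, div_eq_mul_inv]
  have e2 : (2 * ((n / x) ^ (2 / (2 - l)))⁻¹) ^ (l / 2)
      = 2 ^ (l / 2) * (n ^ (1 - l / (2 - l)) * x ^ (l / (2 - l)) / n) := by
    have ha : -(2 / (2 - l)) * (l / 2) = -(l / (2 - l)) := by field_simp
    have hb : n ^ (1 - l / (2 - l)) / n = (n ^ (l / (2 - l)))⁻¹ := by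
      rw [← Real.rpow_neg hn.le, ← Real.rpow_sub_one hn.ne']; congr 1; ring
    rw [Real.mul_rpow (by norm_num) (by positivity), ← Real.rpow_neg hnx.le, ← Real.rpow_mul hnx.le,
      Real.div_rpow hn.le hx.le, ha, mul_div_right_comm, hb, Real.rpow_neg hx.le, Real.rpow_neg hn.le,
      div_inv_eq_mul]
  rw [e1, e2]
  field_simp

lemma sx_hls_J {l : ℝ} (hl : 0 < l) (hl1 : l < 1) {φ : ℝ → ℝ≥0∞} (hφ : Measurable φ)
    (hfin : ∀ t, φ t ≠ ⊤) (hN : ∫⁻ t, φ t ^ (2 / (2 - l)) ≠ ⊤) (s : ℝ) :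
    ∫⁻ t, (if φ t ≤ φ s then φ t * ENNReal.ofReal (|s - t| ^ (-l)) else 0)
      ≤ ENNReal.ofReal (2 / (1 - l) + 2 ^ (l / 2)) *
        (((∫⁻ t, φ t ^ (2 / (2 - l))) ^ ((2 - l) / 2)) ^ (1 - l / (2 - l)) * φ s ^ (l / (2 - l))) := by
  have h2 : 0 < 2 - l := by linarith
  have h1 : 0 < 1 - l := by linarith
  set N := (∫⁻ t, φ t ^ (2 / (2 - l))) ^ ((2 - l) / 2) with hNdef
  have hNtop : N ≠ ⊤ := ENNReal.rpow_ne_top_of_nonneg (by positivity) hN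
  by_cases hs0 : φ s = 0
  · have : ∀ t, (if φ t ≤ φ s then φ t * ENNReal.ofReal (|s - t| ^ (-l)) else 0) = 0 := by
      intro t
      split_ifs with h
      · rw [hs0, nonpos_iff_eq_zero] at h; simp [h]
      · rfl
    simp [this]
  by_cases hN0 : N = 0
  · have hz : ∫⁻ t, φ t ^ (2 / (2 - l)) = 0 := by
      rw [hNdef, ENNReal.rpow_eq_zero_iff_of_pos (by positivity)] at hN0
      exact hN0
    rw [lintegral_eq_zero_iff (hφ.pow_const _)] at hz
    have : ∫⁻ t, (if φ t ≤ φ s then φ t * ENNReal.ofReal (|s - t| ^ (-l)) else 0) = 0 := by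
      rw [← lintegral_zero (μ := (volume : Measure ℝ))]
      refine lintegral_congr_ae ?_
      filter_upwards [hz] with t ht
      have : φ t = 0 := by
        rwa [Pi.zero_apply, ENNReal.rpow_eq_zero_iff_of_pos (by positivity)] at ht
      simp [this]
    rw [this]; exact zero_le
  set x := (φ s).toReal with hxdef
  set n := N.toReal with hndef
  have hx : 0 < x := ENNReal.toReal_pos hs0 (hfin s)
  have hn : 0 < n := ENNReal.toReal_pos hN0 hNtop
  have hxe : φ s = ENNReal.ofReal x := (ENNReal.ofReal_toReal (hfin s)).symm
  have hne : N = ENNReal.ofReal n := (ENNReal.ofReal_toReal hNtop).symm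
  set R := (n / x) ^ (2 / (2 - l)) with hRdef
  have hR : 0 < R := by positivity
  have hk : Measurable fun t => ENNReal.ofReal (|s - t| ^ (-l)) := by fun_prop
  have hset : MeasurableSet {t : ℝ | |s - t| ≤ R} := by
    apply measurableSet_le <;> fun_prop
  calc ∫⁻ t, (if φ t ≤ φ s then φ t * ENNReal.ofReal (|s - t| ^ (-l)) else 0)
      ≤ ∫⁻ t, (φ s * (if |s - t| ≤ R then ENNReal.ofReal (|s - t| ^ (-l)) else 0)
          + φ t * (if |s - t| ≤ R then 0 else ENNReal.ofReal (|s - t| ^ (-l)))) := by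
        refine lintegral_mono fun t => ?_
        dsimp only
        split_ifs with ha hb
        · simp only [mul_zero, add_zero]; gcongr
        · simp
        · exact zero_le
        · exact zero_le
    _ = φ s * (∫⁻ t, if |s - t| ≤ R then ENNReal.ofReal (|s - t| ^ (-l)) else 0)
          + ∫⁻ t, φ t * (if |s - t| ≤ R then 0 else ENNReal.ofReal (|s - t| ^ (-l))) := by
        have hm : Measurable fun t => (if |s - t| ≤ R then ENNReal.ofReal (|s - t| ^ (-l)) else 0) :=
          Measurable.ite hset hk measurable_const
        rw [lintegral_add_left (hm.const_mul _), lintegral_const_mul _ hm]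
    _ ≤ φ s * (2 * ENNReal.ofReal (R ^ (1 - l) / (1 - l)))
          + N * (2 * ENNReal.ofReal R⁻¹) ^ (l / 2) := by
        refine add_le_add (by rw [sx_near hl1 hR]) ?_
        have hc : (2 / (2 - l)).HolderConjugate (2 / l) := by
          rw [Real.holderConjugate_iff]
          constructor
          · rw [lt_div_iff₀ h2]; linarith
          · field_simp; ring
        refine (ENNReal.lintegral_mul_le_Lp_mul_Lq volume hc hφ.aemeasurable
          (Measurable.ite hset measurable_const hk).aemeasurable).trans ?_
        have e1 : 1 / (2 / (2 - l)) = (2 - l) / 2 := by field_simp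
        have e2 : 1 / (2 / l) = l / 2 := by field_simp
        rw [e1, e2, ← sx_far hR s]
        gcongr with t
        split_ifs with ha
        · rw [ENNReal.zero_rpow_of_pos (by positivity)]
        · have hp : 0 < |s - t| := hR.trans (not_le.mp ha)
          rw [ENNReal.ofReal_rpow_of_pos (by positivity), ← Real.rpow_mul hp.le]
          apply le_of_eq; congr 2; field_simp
    _ = ENNReal.ofReal (x * (2 * (R ^ (1 - l) / (1 - l))) + n * (2 * R⁻¹) ^ (l / 2)) := by
        rw [hxe, hne, ENNReal.ofReal_add (by positivity) (by positivity),
          ENNReal.ofReal_mul hx.le, ENNReal.ofReal_mul hn.le, ENNReal.ofReal_mul (by norm_num),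
          ← ENNReal.ofReal_rpow_of_pos (by positivity), ENNReal.ofReal_mul (by norm_num)]
        simp
    _ = _ := by
        rw [hRdef, sx_opt hl hl1 hx hn, ENNReal.ofReal_mul (by positivity),
          ENNReal.ofReal_mul (by positivity), hxe, hne, ENNReal.ofReal_rpow_of_pos hx,
          ENNReal.ofReal_rpow_of_pos hn]

/-- A symmetric Hardy–Littlewood–Sobolev inequality on the line. -/
lemma sx_hls {l : ℝ} (hl : 0 < l) (hl1 : l < 1) {φ : ℝ → ℝ≥0∞} (hφ : Measurable φ)
    (hfin : ∀ t, φ t ≠ ⊤) (hN : ∫⁻ t, φ t ^ (2 / (2 - l)) ≠ ⊤) :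
    ∫⁻ s, ∫⁻ t, φ s * φ t * ENNReal.ofReal (|s - t| ^ (-l))
      ≤ 2 * ENNReal.ofReal (2 / (1 - l) + 2 ^ (l / 2)) * (∫⁻ t, φ t ^ (2 / (2 - l))) ^ (2 - l) := by
  have h2 : 0 < 2 - l := by linarith
  set A : ℝ → ℝ → ℝ≥0∞ := fun s t =>
    if φ t ≤ φ s then φ s * φ t * ENNReal.ofReal (|s - t| ^ (-l)) else 0 with hA
  have hAm : Measurable (Function.uncurry A) := by
    refine Measurable.ite (measurableSet_le (hφ.comp measurable_snd) (hφ.comp measurable_fst)) ?_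
      measurable_const
    exact ((hφ.comp measurable_fst).mul (hφ.comp measurable_snd)).mul (by fun_prop)
  have hAm1 : ∀ s, Measurable (A s) := fun s => hAm.of_uncurry_left
  have step1 : ∫⁻ s, ∫⁻ t, φ s * φ t * ENNReal.ofReal (|s - t| ^ (-l))
      ≤ ∫⁻ s, ∫⁻ t, (A s t + A t s) := by
    refine lintegral_mono fun s => lintegral_mono fun t => ?_
    simp only [hA]
    rcases le_total (φ t) (φ s) with h | h
    · rw [if_pos h]; exact le_self_add
    · rw [if_pos h, mul_comm (φ t), abs_sub_comm t s]; exact le_add_self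
  have step2 : ∫⁻ s, ∫⁻ t, (A s t + A t s) = 2 * ∫⁻ s, ∫⁻ t, A s t := by
    have : ∀ s, ∫⁻ t, (A s t + A t s) = (∫⁻ t, A s t) + ∫⁻ t, A t s :=
      fun s => lintegral_add_left (hAm1 s) (fun t => A t s)
    have hm : Measurable fun s => ∫⁻ t, A s t := hAm.lintegral_prod_right'
    rw [lintegral_congr this, lintegral_add_left hm, two_mul]
    congr 1
    exact lintegral_lintegral_swap (hAm.comp measurable_swap).aemeasurable
  refine step1.trans (step2.le.trans ?_)
  rw [mul_assoc]
  gcongr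
  set M := ∫⁻ t, φ t ^ (2 / (2 - l)) with hM
  set C := ENNReal.ofReal (2 / (1 - l) + 2 ^ (l / 2)) with hC
  calc ∫⁻ s, ∫⁻ t, A s t
      ≤ ∫⁻ s, (C * (M ^ ((2 - l) / 2)) ^ (1 - l / (2 - l))) * φ s ^ (2 / (2 - l)) := by
        refine lintegral_mono fun s => ?_
        have : ∫⁻ t, A s t = φ s * ∫⁻ t, (if φ t ≤ φ s then φ t * ENNReal.ofReal (|s - t| ^ (-l)) else 0) := by
          rw [← lintegral_const_mul' _ _ (hfin s)]
          refine lintegral_congr fun t => ?_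
          simp only [hA, mul_ite, mul_zero, mul_assoc]
        rw [this]
        calc _ ≤ φ s * (C * ((M ^ ((2 - l) / 2)) ^ (1 - l / (2 - l)) * φ s ^ (l / (2 - l)))) := by
              gcongr
              exact sx_hls_J hl hl1 hφ hfin hN s
          _ = (C * (M ^ ((2 - l) / 2)) ^ (1 - l / (2 - l))) * (φ s ^ (1 : ℝ) * φ s ^ (l / (2 - l))) := by
              rw [ENNReal.rpow_one]; ring
          _ = _ := by
              rw [← ENNReal.rpow_add_of_nonneg _ _ (by norm_num) (by positivity)]
              congr 2; field_simp; ring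
    _ = C * ((M ^ ((2 - l) / 2)) ^ (1 - l / (2 - l)) * M ^ (1 : ℝ)) := by
        rw [lintegral_const_mul _ (hφ.pow_const _), ENNReal.rpow_one, mul_assoc]
    _ = C * M ^ (2 - l) := by
        rw [← ENNReal.rpow_mul, ← ENNReal.rpow_add_of_nonneg _ _ _ (by norm_num)]
        · congr 2; field_simp; ring
        · have : (2 - l) / 2 * (1 - l / (2 - l)) = 1 - l := by field_simp; ring
          rw [this]; linarith
    _ ≤ _ := le_rfl

/-- The complex power deformation of a value, keeping its phase. -/
def sxPw (w : ℂ) (a : ℂ) : ℂ := if a = 0 then 0 else a * cexp ((w - 1) * (Real.log ‖a‖ : ℝ))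

lemma sxPw_zero (w : ℂ) : sxPw w 0 = 0 := by simp [sxPw]

lemma sxPw_one (a : ℂ) : sxPw 1 a = a := by
  by_cases h : a = 0 <;> simp [sxPw, h]

lemma sxPw_norm {w : ℂ} (hw : 0 < w.re) (a : ℂ) : ‖sxPw w a‖ = ‖a‖ ^ w.re := by
  by_cases h : a = 0
  · simp [sxPw, h, Real.zero_rpow hw.ne']
  · have ha : 0 < ‖a‖ := norm_pos_iff.mpr h
    rw [sxPw, if_neg h, norm_mul, Complex.norm_exp, Complex.re_mul_ofReal, Complex.sub_re,
      Complex.one_re, mul_comm _ (Real.log _), ← Real.rpow_def_of_pos ha, Real.rpow_sub_one ha.ne']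
    field_simp

lemma sxPw_conj (w a : ℂ) :
    (starRingEnd ℂ) (sxPw ((starRingEnd ℂ) w) a) = sxPw w ((starRingEnd ℂ) a) := by
  by_cases h : a = 0
  · simp [sxPw, h]
  · simp [sxPw, h, ← Complex.exp_conj]

lemma sxPw_diff (a : ℂ) : Differentiable ℂ (fun w => sxPw w a) := by
  by_cases h : a = 0
  · simp [sxPw, h]
  · simp only [sxPw, h, if_false]
    fun_prop

/-- the image of a simple function as an `L²` element. -/
def sxSL (f : SimpleFunc E2 ℂ) (hf : f.FinMeasSupp volume) (ψ : ℂ → ℂ) (hψ : ψ 0 = 0) :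
    Lp ℂ 2 (volume : Measure E2) :=
  ((SimpleFunc.memLp_iff_finMeasSupp (by norm_num) (by norm_num)).mpr (hf.map hψ)).toLp (f.map ψ)

lemma sxSL_coe (f : SimpleFunc E2 ℂ) (hf : f.FinMeasSupp volume) (ψ : ℂ → ℂ) (hψ : ψ 0 = 0) :
    (sxSL f hf ψ hψ : E2 → ℂ) =ᵐ[volume] fun x => ψ (f x) := MemLp.coeFn_toLp _

lemma sxSL_sum (f : SimpleFunc E2 ℂ) (hf : f.FinMeasSupp volume) :
    ∃ e : ℂ → Lp ℂ 2 (volume : Measure E2), ∀ (ψ : ℂ → ℂ) (hψ : ψ 0 = 0),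
      sxSL f hf ψ hψ = ∑ a ∈ f.range, ψ a • e a := by
  classical
  refine ⟨fun a => sxSL f hf (fun b => if b = a ∧ a ≠ 0 then 1 else 0) (by
    simp only [ite_eq_right_iff]; rintro ⟨h1, h2⟩; exact absurd h1.symm h2), fun ψ hψ => ?_⟩
  apply Lp.ext
  have h1 : ∀ᵐ x : E2, ∀ a : f.range, (ψ a • sxSL f hf (fun b => if b = a ∧ (a : ℂ) ≠ 0 then 1 else 0) (by
    simp only [ite_eq_right_iff]; rintro ⟨h1, h2⟩; exact absurd h1.symm h2) : Lp ℂ 2 (volume : Measure E2)) x =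
      ψ a * (if f x = a ∧ (a : ℂ) ≠ 0 then 1 else 0) := by
    rw [ae_all_iff]
    intro a
    filter_upwards [Lp.coeFn_smul (ψ a) (sxSL f hf (fun b => if b = a ∧ (a : ℂ) ≠ 0 then 1 else 0) (by
      simp only [ite_eq_right_iff]; rintro ⟨h1, h2⟩; exact absurd h1.symm h2)),
      sxSL_coe f hf (fun b => if b = a ∧ (a : ℂ) ≠ 0 then 1 else 0) (by
      simp only [ite_eq_right_iff]; rintro ⟨h1, h2⟩; exact absurd h1.symm h2)] with x h1 h2
    rw [h1, Pi.smul_apply, h2, smul_eq_mul]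
  refine (sxSL_coe f hf ψ hψ).trans ?_
  filter_upwards [h1, Lp.coeFn_finsetSum f.range (fun a => ψ a • sxSL f hf
    (fun b => if b = a ∧ a ≠ 0 then 1 else 0) (by
    simp only [ite_eq_right_iff]; rintro ⟨h1, h2⟩; exact absurd h1.symm h2))] with x h1 h2
  rw [h2, Finset.sum_apply]
  refine Eq.trans ?_ (Finset.sum_congr (rfl : f.range = f.range)
    (g := fun a : ℂ => ψ a * (if f x = a ∧ a ≠ 0 then 1 else 0)) ?_).symm
  rotate_left
  · intro a ha
    exact h1 ⟨a, ha⟩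
  rw [Finset.sum_eq_single (f x)]
  · by_cases h : f x = 0 <;> simp [h, hψ]
  · intro b _ hb
    simp [hb.symm]
  · intro h
    exact absurd (f.mem_range_self x) h

lemma sx_norm_sq (F : Lp ℂ 2 (volume : Measure E2)) : ‖F‖ ^ 2 = ∫ x, ‖F x‖ ^ 2 := by
  have h := @inner_self_eq_norm_sq ℂ _ _ _ _ F
  rw [← h, L2.inner_def, ← integral_re (L2.integrable_inner F F)]
  refine integral_congr_ae (Filter.Eventually.of_forall fun x => ?_)
  exact @inner_self_eq_norm_sq ℂ _ _ _ _ (F x)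

lemma sx_interp_simple (hU : SxProp U) {t : ℝ} (ht : t ≠ 0) {p : ℝ} (hp1 : 1 < p) (hp2 : p < 2)
    (f g : SimpleFunc E2 ℂ) (hf : f.FinMeasSupp volume) (hg : g.FinMeasSupp volume) :
    ‖inner ℂ (sxSL g hg id rfl) (U t (sxSL f hf id rfl))‖ ≤
      (|t|⁻¹) ^ (2 / p - 1) * ((∫ x, ‖f x‖ ^ p) * ∫ x, ‖g x‖ ^ p) ^ (1 / p) := by
  have hp0 : 0 < p := by linarith
  set N := (∫ x, ‖f x‖ ^ p) * ∫ x, ‖g x‖ ^ p with hN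
  have hf0 : 0 ≤ ∫ x, ‖f x‖ ^ p := integral_nonneg fun x => by positivity
  have hg0 : 0 ≤ ∫ x, ‖g x‖ ^ p := integral_nonneg fun x => by positivity
  have hN0 : 0 ≤ N := mul_nonneg hf0 hg0
  set ew : ℂ → ℂ := fun z => (p / 2 : ℝ) * (1 + z) with hew
  have hewre : ∀ z, (ew z).re = p / 2 * (1 + z.re) := by
    intro z; simp only [hew]; rw [Complex.re_ofReal_mul]; simp
  have hewconj : ∀ z, ew ((starRingEnd ℂ) z) = (starRingEnd ℂ) (ew z) := by
    intro z; simp only [hew]; rw [map_mul, map_add, Complex.conj_ofReal, map_one]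
  set Φ : ℂ → ℂ := fun z => inner ℂ (sxSL g hg (sxPw (ew ((starRingEnd ℂ) z))) (sxPw_zero _))
    (U t (sxSL f hf (sxPw (ew z)) (sxPw_zero _))) with hΦ
  obtain ⟨e, he⟩ := sxSL_sum f hf
  obtain ⟨e', he'⟩ := sxSL_sum g hg
  have hsum : ∀ z, Φ z = ∑ b ∈ g.range, ∑ a ∈ f.range,
      sxPw (ew z) ((starRingEnd ℂ) b) * (sxPw (ew z) a * inner ℂ (e' b) (U t (e a))) := by
    intro z
    simp only [hΦ]
    rw [he, he', map_sum, sum_inner]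
    refine Finset.sum_congr rfl fun b _ => ?_
    rw [inner_sum]
    refine Finset.sum_congr rfl fun a _ => ?_
    rw [map_smul, inner_smul_left, inner_smul_right, hewconj, sxPw_conj]
  have hdiff : Differentiable ℂ Φ := by
    have : Φ = fun z => ∑ b ∈ g.range, ∑ a ∈ f.range,
      sxPw (ew z) ((starRingEnd ℂ) b) * (sxPw (ew z) a * inner ℂ (e' b) (U t (e a))) := funext hsum
    rw [this]
    have hed : Differentiable ℂ ew := by simp only [hew]; fun_prop
    have hc : ∀ a, Differentiable ℂ fun z => sxPw (ew z) a := fun a => (sxPw_diff a).comp hed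
    refine Differentiable.fun_sum fun b _ => Differentiable.fun_sum fun a _ => ?_
    exact (hc _).mul ((hc _).mul_const _)
  have hpwb : ∀ z ∈ HadamardThreeLines.verticalClosedStrip 0 1, ∀ a, ‖sxPw (ew z) a‖ ≤ (1 + ‖a‖) ^ p := by
    intro z hz a
    have hz' : 0 ≤ z.re ∧ z.re ≤ 1 := hz
    have h1 : 0 < (ew z).re := by rw [hewre]; nlinarith
    have h2 : (ew z).re ≤ p := by rw [hewre]; nlinarith
    rw [sxPw_norm h1]
    calc ‖a‖ ^ (ew z).re ≤ (1 + ‖a‖) ^ (ew z).re :=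
          Real.rpow_le_rpow (norm_nonneg _) (by linarith) h1.le
      _ ≤ _ := Real.rpow_le_rpow_of_exponent_le (by linarith [norm_nonneg a]) h2
  have hbdd : BddAbove (Set.image (norm ∘ Φ) (HadamardThreeLines.verticalClosedStrip 0 1)) := by
    refine ⟨∑ b ∈ g.range, ∑ a ∈ f.range,
      (1 + ‖(starRingEnd ℂ) b‖) ^ p * ((1 + ‖a‖) ^ p * ‖inner ℂ (e' b) (U t (e a))‖), ?_⟩
    rintro _ ⟨z, hz, rfl⟩
    simp only [Function.comp_apply, hsum]
    refine (norm_sum_le _ _).trans (Finset.sum_le_sum fun b _ => ?_)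
    refine (norm_sum_le _ _).trans (Finset.sum_le_sum fun a _ => ?_)
    rw [norm_mul, norm_mul]
    have := hpwb z hz a
    have := hpwb z hz ((starRingEnd ℂ) b)
    gcongr
  -- norms on the lines
  have hL2 : ∀ (k : SimpleFunc E2 ℂ) (hk : k.FinMeasSupp volume) (w : ℂ), w.re = p / 2 →
      ‖sxSL k hk (sxPw w) (sxPw_zero _)‖ ^ 2 = ∫ x, ‖k x‖ ^ p := by
    intro k hk w hw
    rw [sx_norm_sq]
    refine integral_congr_ae ?_
    filter_upwards [sxSL_coe k hk (sxPw w) (sxPw_zero _)] with x hx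
    rw [hx, sxPw_norm (by rw [hw]; positivity), hw, ← Real.rpow_natCast, ← Real.rpow_mul (norm_nonneg _)]
    congr 1; push_cast; ring
  have hL1 : ∀ (k : SimpleFunc E2 ℂ) (hk : k.FinMeasSupp volume) (w : ℂ), w.re = p →
      ∫ x, ‖sxSL k hk (sxPw w) (sxPw_zero _) x‖ = ∫ x, ‖k x‖ ^ p := by
    intro k hk w hw
    refine integral_congr_ae ?_
    filter_upwards [sxSL_coe k hk (sxPw w) (sxPw_zero _)] with x hx
    rw [hx, sxPw_norm (by rw [hw]; positivity), hw]
  have hL1i : ∀ (k : SimpleFunc E2 ℂ) (hk : k.FinMeasSupp volume) (w : ℂ),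
      Integrable (sxSL k hk (sxPw w) (sxPw_zero _)) := by
    intro k hk w
    exact (SimpleFunc.FinMeasSupp.integrable (hk.map (sxPw_zero w))).congr
      (sxSL_coe k hk (sxPw w) (sxPw_zero _)).symm
  have hline0 : ∀ z ∈ re ⁻¹' {(0 : ℝ)}, ‖Φ z‖ ≤ N ^ (1 / 2 : ℝ) := by
    intro z hz
    have hz' : z.re = 0 := hz
    have h1 := hL2 f hf (ew z) (by rw [hewre, hz']; ring)
    have h2 := hL2 g hg (ew ((starRingEnd ℂ) z)) (by rw [hewre, Complex.conj_re, hz']; ring)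
    refine (norm_inner_le_norm _ _).trans ?_
    rw [(U t).norm_map, ← Real.sqrt_eq_rpow]
    apply Real.le_sqrt_of_sq_le
    rw [mul_pow, h1, h2, hN, mul_comm]
  have hline1 : ∀ z ∈ re ⁻¹' {(1 : ℝ)}, ‖Φ z‖ ≤ |t|⁻¹ * N := by
    intro z hz
    have hz' : z.re = 1 := hz
    refine (sx_disp hU ht _ _ (hL1i f hf _) (hL1i g hg _)).trans ?_
    rw [hL1 f hf (ew z) (by rw [hewre, hz']; ring),
      hL1 g hg (ew ((starRingEnd ℂ) z)) (by rw [hewre, Complex.conj_re, hz']; ring)]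
  have hth0 : 0 < 2 / p - 1 := by rw [sub_pos, lt_div_iff₀ hp0]; linarith
  have hth1 : 2 / p - 1 < 1 := by rw [sub_lt_iff_lt_add, div_lt_iff₀ hp0]; linarith
  have h3 := HadamardThreeLines.norm_le_interp_of_mem_verticalClosedStrip₀₁' Φ
    (z := ((2 / p - 1 : ℝ) : ℂ)) (a := N ^ (1 / 2 : ℝ)) (b := |t|⁻¹ * N)
    (by
      simp only [HadamardThreeLines.verticalClosedStrip, Set.mem_preimage, Complex.ofReal_re]
      exact ⟨hth0.le, hth1.le⟩) hdiff.diffContOnCl hbdd hline0 hline1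
  have hone : ew ((2 / p - 1 : ℝ) : ℂ) = 1 := by
    simp only [hew]
    rw [← Complex.ofReal_one, ← Complex.ofReal_add, ← Complex.ofReal_mul]
    congr 1; field_simp; ring
  have hΦ1 : Φ ((2 / p - 1 : ℝ) : ℂ) = inner ℂ (sxSL g hg id rfl) (U t (sxSL f hf id rfl)) := by
    simp only [hΦ, Complex.conj_ofReal, hone]
    have : sxPw 1 = id := funext sxPw_one
    simp only [this]
  rw [hΦ1, Complex.ofReal_re] at h3
  refine h3.trans (le_of_eq ?_)
  rw [Real.mul_rpow (by positivity) hN0, ← Real.rpow_mul hN0, mul_left_comm]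
  congr 1
  rw [← Real.rpow_add' hN0]
  · congr 1; field_simp; ring
  · have : 1 / 2 * (1 - (2 / p - 1)) + (2 / p - 1) = 1 / p := by field_simp; ring
    rw [this]; positivity

lemma sx_approx (F : Lp ℂ 2 (volume : Measure E2)) :
    ∃ (f : ℕ → SimpleFunc E2 ℂ) (hf : ∀ n, (f n).FinMeasSupp volume),
      (∀ n x, ‖f n x‖ ≤ 2 * ‖F x‖) ∧
      Filter.Tendsto (fun n => sxSL (f n) (hf n) id rfl) Filter.atTop (nhds F) := by
  have hm : Measurable F := (Lp.stronglyMeasurable F).measurable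
  set f : ℕ → SimpleFunc E2 ℂ := fun n =>
    SimpleFunc.approxOn F hm (Set.range F ∪ {0}) 0 (by simp) n with hfdef
  have hmem : ∀ n, MemLp (f n) 2 volume := fun n =>
    SimpleFunc.memLp_approxOn_range hm (Lp.memLp F) n
  have hfin : ∀ n, (f n).FinMeasSupp volume := fun n =>
    (SimpleFunc.memLp_iff_finMeasSupp (by norm_num) (by norm_num)).mp (hmem n)
  refine ⟨f, hfin, ?_, ?_⟩
  · intro n x
    rw [two_mul]
    exact SimpleFunc.norm_approxOn_zero_le hm (by simp) x n
  · have h := SimpleFunc.tendsto_approxOn_range_Lp_eLpNorm (p := 2) (by norm_num) (μ := volume) hm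
      (Lp.memLp F).2
    rw [tendsto_iff_edist_tendsto_0]
    refine h.congr fun n => ?_
    rw [Lp.edist_def]
    refine eLpNorm_congr_ae ?_
    filter_upwards [sxSL_coe (f n) (hfin n) id rfl] with x hx
    simp only [Pi.sub_apply, hx]; rfl

lemma sx_interp (hU : SxProp U) {t : ℝ} (ht : t ≠ 0) {p : ℝ} (hp1 : 1 < p) (hp2 : p < 2)
    (F G : Lp ℂ 2 (volume : Measure E2)) (hF : Integrable fun x => ‖F x‖ ^ p)
    (hG : Integrable fun x => ‖G x‖ ^ p) :
    ‖inner ℂ G (U t F)‖ ≤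
      4 * |t| ^ (-(2 / p - 1)) * ((∫ x, ‖F x‖ ^ p) ^ (1 / p) * (∫ x, ‖G x‖ ^ p) ^ (1 / p)) := by
  have hp0 : 0 < p := by linarith
  have key : ∀ (H : Lp ℂ 2 (volume : Measure E2)) (h : SimpleFunc E2 ℂ),
      (Integrable fun x => ‖H x‖ ^ p) → (∀ x, ‖h x‖ ≤ 2 * ‖H x‖) →
      ∫ x, ‖h x‖ ^ p ≤ 2 ^ p * ∫ x, ‖H x‖ ^ p := by
    intro H h hH hh
    rw [← integral_const_mul]
    refine integral_mono_of_nonneg (Filter.Eventually.of_forall fun x => ?_) (hH.const_mul _)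
      (Filter.Eventually.of_forall fun x => ?_)
    · simp only [Pi.zero_apply]; positivity
    · simp only
      rw [← Real.mul_rpow (by norm_num) (norm_nonneg _)]
      exact Real.rpow_le_rpow (norm_nonneg _) (hh x) hp0.le
  obtain ⟨f, hf, hfb, hfl⟩ := sx_approx F
  obtain ⟨g, hg, hgb, hgl⟩ := sx_approx G
  have hlim : Filter.Tendsto (fun n => inner ℂ (sxSL (g n) (hg n) id rfl) (U t (sxSL (f n) (hf n) id rfl)))
      Filter.atTop (nhds (inner ℂ G (U t F))) :=
    Filter.Tendsto.inner hgl (((U t).continuous.tendsto F).comp hfl)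
  refine le_of_tendsto hlim.norm (Filter.Eventually.of_forall fun n => ?_)
  refine (sx_interp_simple hU ht hp1 hp2 (f n) (g n) (hf n) (hg n)).trans ?_
  have hf0 : 0 ≤ ∫ x, ‖f n x‖ ^ p := integral_nonneg fun x => by positivity
  have hg0 : 0 ≤ ∫ x, ‖g n x‖ ^ p := integral_nonneg fun x => by positivity
  have hF0 : 0 ≤ ∫ x, ‖F x‖ ^ p := integral_nonneg fun x => by positivity
  have hG0 : 0 ≤ ∫ x, ‖G x‖ ^ p := integral_nonneg fun x => by positivity
  have e1 : ((∫ x, ‖f n x‖ ^ p) * ∫ x, ‖g n x‖ ^ p) ^ (1 / p)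
      ≤ ((2 ^ p * ∫ x, ‖F x‖ ^ p) * (2 ^ p * ∫ x, ‖G x‖ ^ p)) ^ (1 / p) := by
    refine Real.rpow_le_rpow (by positivity) ?_ (by positivity)
    exact mul_le_mul (key F _ hF (hfb n)) (key G _ hG (hgb n)) hg0 (by positivity)
  have e2 : ((2 ^ p * ∫ x, ‖F x‖ ^ p) * (2 ^ p * ∫ x, ‖G x‖ ^ p)) ^ (1 / p)
      = 4 * ((∫ x, ‖F x‖ ^ p) ^ (1 / p) * (∫ x, ‖G x‖ ^ p) ^ (1 / p)) := by
    have h2 : ((2 : ℝ) ^ p) ^ (1 / p) = 2 := by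
      rw [← Real.rpow_mul (by norm_num), mul_one_div_cancel hp0.ne', Real.rpow_one]
    rw [Real.mul_rpow (by positivity) (by positivity), Real.mul_rpow (by positivity) hF0,
      Real.mul_rpow (by positivity) hG0, h2]
    ring
  rw [e2] at e1
  have e3 : (|t|⁻¹) ^ (2 / p - 1) = |t| ^ (-(2 / p - 1)) := by
    rw [Real.inv_rpow (abs_nonneg _), Real.rpow_neg (abs_nonneg _)]
  rw [e3]
  calc _ ≤ |t| ^ (-(2 / p - 1)) * (4 * ((∫ x, ‖F x‖ ^ p) ^ (1 / p) * (∫ x, ‖G x‖ ^ p) ^ (1 / p))) :=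
        mul_le_mul_of_nonneg_left e1 (by positivity)
    _ = _ := by ring


/-- The truncated power nonlinearity. -/
def sxG (n s : ℝ) (z : ℂ) : ℂ := ((min ‖z‖ n) ^ s : ℝ) • z

lemma sx_pow_aux {s b w : ℝ} (hs : 0 < s) (hw : 0 ≤ w) (hb : w ≤ b) :
    (b ^ s - w ^ s) * w ≤ (s + 1) * b ^ s * (b - w) := by
  rcases hw.eq_or_lt with rfl | hw0
  · have : 0 ≤ b ^ s := Real.rpow_nonneg hb _
    simp only [mul_zero, sub_zero]
    positivity
  have hb0 : 0 < b := lt_of_lt_of_le hw0 hb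
  have h1 := one_add_mul_self_le_rpow_one_add (s := w / b - 1) (p := s + 1)
    (by have : 0 ≤ w / b := by positivity
        linarith) (by linarith)
  rw [show 1 + (w / b - 1) = w / b by ring, Real.div_rpow hw hb0.le, le_div_iff₀ (by positivity),
    Real.rpow_add_one hb0.ne', Real.rpow_add_one hw0.ne'] at h1
  have h2 : (1 + (s + 1) * (w / b - 1)) * (b ^ s * b) = b ^ s * b + (s + 1) * b ^ s * (w - b) := by
    field_simp
  rw [h2] at h1
  have h3 : b ^ s * w ≤ b ^ s * b := by gcongr
  nlinarith

lemma sxG_sub_le {n s : ℝ} (hn : 0 ≤ n) (hs : 0 < s) (z w : ℂ) (hzw : ‖w‖ ≤ ‖z‖) :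
    ‖sxG n s z - sxG n s w‖ ≤ n ^ s * (s + 2) * ‖z - w‖ := by
  have e : sxG n s z - sxG n s w = ((min ‖z‖ n) ^ s : ℝ) • (z - w) +
      ((min ‖z‖ n) ^ s - (min ‖w‖ n) ^ s : ℝ) • w := by
    simp only [sxG, smul_sub, sub_smul]; ring
  have hz0 : 0 ≤ min ‖z‖ n := le_min (norm_nonneg _) hn
  have hz1 : (min ‖z‖ n) ^ s ≤ n ^ s := Real.rpow_le_rpow hz0 (min_le_right _ _) hs.le
  have hz2 : 0 ≤ (min ‖z‖ n) ^ s := Real.rpow_nonneg hz0 _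
  have hmono : (min ‖w‖ n) ^ s ≤ (min ‖z‖ n) ^ s :=
    Real.rpow_le_rpow (le_min (norm_nonneg _) hn) (min_le_min_right _ hzw) hs.le
  have h2 : ((min ‖z‖ n) ^ s - (min ‖w‖ n) ^ s) * ‖w‖ ≤ (s + 1) * n ^ s * ‖z - w‖ := by
    rcases le_total n ‖w‖ with h | h
    · rw [min_eq_right h, min_eq_right (h.trans hzw), sub_self, zero_mul]
      positivity
    · rw [min_eq_left h]
      have hb : ‖w‖ ≤ min ‖z‖ n := le_min hzw h
      refine (sx_pow_aux hs (norm_nonneg w) hb).trans ?_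
      have h5 : min ‖z‖ n - ‖w‖ ≤ ‖z - w‖ :=
        (sub_le_sub_right (min_le_left _ _) _).trans (norm_sub_norm_le _ _)
      have h6 : 0 ≤ min ‖z‖ n - ‖w‖ := sub_nonneg.2 hb
      gcongr
  rw [e]
  refine (norm_add_le _ _).trans ?_
  rw [norm_smul, norm_smul, Real.norm_of_nonneg hz2, Real.norm_of_nonneg (sub_nonneg.2 hmono)]
  have h3 : (min ‖z‖ n) ^ s * ‖z - w‖ ≤ n ^ s * ‖z - w‖ := by gcongr
  linarith

lemma sxG_lip {n s : ℝ} (hn : 0 ≤ n) (hs : 0 < s) :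
    LipschitzWith (Real.toNNReal (n ^ s * (s + 2))) (sxG n s) := by
  refine LipschitzWith.of_dist_le_mul fun z w => ?_
  rw [Real.coe_toNNReal _ (by positivity), dist_eq_norm, dist_eq_norm]
  rcases le_total ‖w‖ ‖z‖ with h | h
  · exact sxG_sub_le hn hs z w h
  · rw [norm_sub_rev, norm_sub_rev z w]
    exact sxG_sub_le hn hs w z h

lemma sxG_zero (n s : ℝ) : sxG n s 0 = 0 := by simp [sxG]

/-- The truncated power nonlinearity acting on `L²`. -/
def sxGL {n s : ℝ} (hn : 0 ≤ n) (hs : 0 < s) (F : Lp ℂ 2 (volume : Measure E2)) :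
    Lp ℂ 2 (volume : Measure E2) := (sxG_lip hn hs).compLp (sxG_zero n s) F

lemma sxGL_coe {n s : ℝ} (hn : 0 ≤ n) (hs : 0 < s) (F : Lp ℂ 2 (volume : Measure E2)) :
    (sxGL hn hs F : E2 → ℂ) =ᵐ[volume] fun x => sxG n s (F x) :=
  (sxG_lip hn hs).coeFn_compLp (sxG_zero n s) F

lemma sxGL_cont {n s : ℝ} (hn : 0 ≤ n) (hs : 0 < s) : Continuous (sxGL hn hs) :=
  (sxG_lip hn hs).continuous_compLp (sxG_zero n s)

/-- The truncated power integral. -/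
def sxTM (n s : ℝ) (F : Lp ℂ 2 (volume : Measure E2)) : ℝ := ∫ x, (min ‖F x‖ n) ^ s * ‖F x‖ ^ 2

lemma sxTM_int {n s : ℝ} (hn : 0 ≤ n) (hs : 0 < s) (F : Lp ℂ 2 (volume : Measure E2)) :
    Integrable (fun x => (min ‖F x‖ n) ^ s * ‖F x‖ ^ 2) := by
  have h0 : Integrable (fun x => ‖F x‖ ^ 2) :=
    (memLp_two_iff_integrable_sq_norm (Lp.aestronglyMeasurable F)).1 (Lp.memLp F)
  have hm : Measurable F := (Lp.stronglyMeasurable F).measurable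
  refine (h0.const_mul (n ^ s)).mono' (by fun_prop) (Filter.Eventually.of_forall fun x => ?_)
  have : 0 ≤ min ‖F x‖ n := le_min (norm_nonneg _) hn
  rw [Real.norm_of_nonneg (by positivity)]
  have := Real.rpow_le_rpow this (min_le_right _ _) hs.le
  gcongr

lemma sxTM_nonneg {n s : ℝ} (hn : 0 ≤ n) (F : Lp ℂ 2 (volume : Measure E2)) : 0 ≤ sxTM n s F := by
  refine integral_nonneg fun x => ?_
  have : 0 ≤ min ‖F x‖ n := le_min (norm_nonneg _) hn
  positivity

lemma sxTM_inner {n s : ℝ} (hn : 0 ≤ n) (hs : 0 < s) (F : Lp ℂ 2 (volume : Measure E2)) :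
    inner ℂ (sxGL hn hs F) F = ((sxTM n s F : ℝ) : ℂ) := by
  rw [L2.inner_def, sxTM, ← integral_complex_ofReal]
  refine integral_congr_ae ?_
  filter_upwards [sxGL_coe hn hs F] with x hx
  rw [hx, sxG, real_smul, ← smul_eq_mul, inner_smul_left, inner_self_eq_norm_sq_to_K,
    Complex.conj_ofReal]
  push_cast
  rfl

lemma sxTM_cont {n s : ℝ} (hn : 0 ≤ n) (hs : 0 < s) : Continuous (sxTM n s) := by
  have h : Continuous fun F : Lp ℂ 2 (volume : Measure E2) => (inner ℂ (sxGL hn hs F) F).re :=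
    Complex.continuous_re.comp ((sxGL_cont hn hs).inner continuous_id)
  refine h.congr fun F => ?_
  rw [sxTM_inner, Complex.ofReal_re]

lemma sx_pow_aux2 {s p a b : ℝ} (hs : 0 < s) (hp : p = 2 - s / (s + 1)) (ha : 0 ≤ a) (hab : a ≤ b) :
    (a ^ s * b) ^ p ≤ a ^ s * b ^ 2 := by
  have hp1 : p = 1 + 1 / (s + 1) := by rw [hp]; field_simp; ring
  have hp0 : 0 < p := by rw [hp1]; positivity
  rcases ha.eq_or_lt with rfl | ha0
  · rw [Real.zero_rpow hs.ne', zero_mul, zero_mul, Real.zero_rpow hp0.ne']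
  have hb0 : 0 < b := lt_of_lt_of_le ha0 hab
  rw [Real.mul_rpow (by positivity) hb0.le, ← Real.rpow_mul ha,
    show s * p = s + s / (s + 1) by rw [hp1]; ring, Real.rpow_add ha0, mul_assoc]
  have h1 : a ^ (s / (s + 1)) * b ^ p ≤ b ^ 2 := by
    calc a ^ (s / (s + 1)) * b ^ p ≤ b ^ (s / (s + 1)) * b ^ p := by
          have := Real.rpow_le_rpow ha hab (by positivity : 0 ≤ s / (s + 1))
          gcongr
      _ = b ^ 2 := by
          rw [← Real.rpow_add hb0, ← Real.rpow_natCast]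
          congr 1
          rw [hp]; push_cast; ring
  gcongr

lemma sxTM_pow {n s p : ℝ} (hn : 0 ≤ n) (hs : 0 < s) (hp : p = 2 - s / (s + 1))
    (F : Lp ℂ 2 (volume : Measure E2)) :
    Integrable (fun x => ‖sxGL hn hs F x‖ ^ p) ∧ ∫ x, ‖sxGL hn hs F x‖ ^ p ≤ sxTM n s F := by
  have hle : ∀ᵐ x : E2, ‖sxGL hn hs F x‖ ^ p ≤ (min ‖F x‖ n) ^ s * ‖F x‖ ^ 2 := by
    filter_upwards [sxGL_coe hn hs F] with x hx
    have h0 : 0 ≤ min ‖F x‖ n := le_min (norm_nonneg _) hn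
    rw [hx, sxG, norm_smul, Real.norm_of_nonneg (by positivity)]
    exact sx_pow_aux2 hs hp h0 (min_le_left _ _)
  have hm : Measurable (sxGL hn hs F) := (Lp.stronglyMeasurable _).measurable
  have hInteg : Integrable (fun x => ‖sxGL hn hs F x‖ ^ p) := by
    refine (sxTM_int hn hs F).mono' ((hm.norm.pow_const p).aestronglyMeasurable) ?_
    filter_upwards [hle] with x hx
    rw [Real.norm_of_nonneg (by positivity)]
    exact hx
  exact ⟨hInteg, integral_mono_ae hInteg (sxTM_int hn hs F) hle⟩


lemma sx_core (hU : SxProp U) {Q : ℝ} (hQ : 2 < Q) (f : Lp ℂ 2 (volume : Measure E2))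
    (F : ℝ → Lp ℂ 2 (volume : Measure E2)) (hFc : Continuous F) (m : ℝ → ℝ) (hm : Continuous m)
    (hin : ∀ t, inner ℂ (F t) (U t f) = ((m t : ℝ) : ℂ))
    (hFi : ∀ t, Integrable fun x => ‖F t x‖ ^ (2 * Q / (Q + 2)))
    (hFm : ∀ t, ∫ x, ‖F t x‖ ^ (2 * Q / (Q + 2)) ≤ m t)
    (E : Set ℝ) (hE : IsCompact E) (hE0 : ∀ t ∈ E, 0 < m t) :
    ∫⁻ t in E, ENNReal.ofReal (m t ^ ((Q - 2) / 2)) ≤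
      ENNReal.ofReal ((8 * (2 / (1 - 2 / Q) + 2 ^ (2 / Q / 2)) * ‖f‖ ^ 2) ^ (Q / 2)) := by
  have hQ0 : 0 < Q := by linarith
  set l : ℝ := 2 / Q with hl
  have hl0 : 0 < l := by positivity
  have hl1 : l < 1 := by rw [hl, div_lt_one hQ0]; exact hQ
  set K : ℝ := 2 / (1 - l) + 2 ^ (l / 2) with hK
  have hK0 : 0 < K := by
    have : 0 < 1 - l := by linarith
    positivity
  set p : ℝ := 2 * Q / (Q + 2) with hp
  have hp1 : 1 < p := by rw [hp, lt_div_iff₀ (by linarith)]; linarith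
  have hp2 : p < 2 := by rw [hp, div_lt_iff₀ (by linarith)]; linarith
  have hpl : 2 / p - 1 = l := by rw [hp, hl]; field_simp; ring
  have hEm : MeasurableSet E := hE.measurableSet
  have hmE : ∀ a : ℝ, ContinuousOn (fun t => m t ^ a) E := fun a =>
    hm.continuousOn.rpow_const fun t ht => Or.inl (hE0 t ht).ne'
  set W : ℝ → Lp ℂ 2 (volume : Measure E2) := fun t =>
    ((m t ^ ((Q - 4) / 2) : ℝ) : ℂ) • U (-t) (F t) with hW
  have hWc : ContinuousOn W E :=
    (Complex.continuous_ofReal.comp_continuousOn (hmE _)).smul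
      (sx_cont_joint hU continuous_neg hFc).continuousOn
  have hWi : IntegrableOn W E := hWc.integrableOn_compact hE
  set V := ∫ t in E, W t with hV
  have hAi : IntegrableOn (fun t => m t ^ ((Q - 2) / 2)) E := (hmE _).integrableOn_compact hE
  set A : ℝ := ∫ t in E, m t ^ ((Q - 2) / 2) with hA
  have hA0 : 0 ≤ A := setIntegral_nonneg hEm fun t ht => (Real.rpow_pos_of_pos (hE0 t ht) _).le
  have hAl : ∫⁻ t in E, ENNReal.ofReal (m t ^ ((Q - 2) / 2)) = ENNReal.ofReal A := by
    rw [hA, ofReal_integral_eq_lintegral_ofReal hAi]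
    filter_upwards [ae_restrict_mem hEm] with t ht
    exact (Real.rpow_pos_of_pos (hE0 t ht) _).le
  -- pairing with `f`
  have h1 : inner ℂ f V = (A : ℂ) := by
    rw [hV, ← integral_inner hWi, hA, ← integral_complex_ofReal]
    refine setIntegral_congr_fun hEm fun t ht => ?_
    simp only [hW]
    rw [inner_smul_right, ← inner_conj_symm]
    have := sx_inner_adj hU t 0 f (F t)
    rw [sx_zero hU, add_zero, hin] at this
    rw [this, Complex.conj_ofReal, ← Complex.ofReal_mul]
    congr 1
    rw [← Real.rpow_add_one (hE0 t ht).ne']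
    congr 1; ring
  have h2 : A ≤ ‖f‖ * ‖V‖ := by
    have := norm_inner_le_norm (𝕜 := ℂ) f V
    rwa [h1, Complex.norm_real, Real.norm_of_nonneg hA0] at this
  -- the quadratic form
  set φ : ℝ → ℝ≥0∞ := E.indicator fun t => ENNReal.ofReal (m t ^ ((Q - 1) * (Q - 2) / (2 * Q))) with hφ
  have hφm : Measurable φ := by
    refine Measurable.indicator ?_ hEm
    exact (hm.measurable.pow_const _).ennreal_ofReal
  have hφf : ∀ t, φ t ≠ ⊤ := by
    intro t
    by_cases ht : t ∈ E <;> simp [hφ, ht]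
  have hexp : 2 / (2 - l) = Q / (Q - 1) := by
    have : Q - 1 ≠ 0 := by linarith
    rw [hl, show 2 - 2 / Q = 2 * (Q - 1) / Q by field_simp]
    field_simp
  have hφA : ∫⁻ t, φ t ^ (2 / (2 - l)) = ENNReal.ofReal A := by
    rw [← hAl, ← lintegral_indicator hEm]
    congr 1
    funext t
    by_cases ht : t ∈ E
    · simp only [hφ, Set.indicator_of_mem ht]
      have hQ1 : 0 < Q - 1 := by linarith
      rw [hexp, ENNReal.ofReal_rpow_of_nonneg (Real.rpow_pos_of_pos (hE0 t ht) _).le (by positivity),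
        ← Real.rpow_mul (hE0 t ht).le]
      congr 2
      field_simp
    · simp only [hφ, Set.indicator_of_notMem ht]
      rw [ENNReal.zero_rpow_of_pos]
      have : 0 < 2 - l := by linarith
      positivity
  have hquad : ∀ s ∈ E, ∀ t ∈ E, s ≠ t → ‖inner ℂ (W s) (W t)‖ₑ ≤
      ENNReal.ofReal 4 * (φ s * φ t * ENNReal.ofReal (|s - t| ^ (-l))) := by
    intro s hs t ht hst
    have hi := sx_interp hU (sub_ne_zero.2 hst) hp1 hp2 (F t) (F s) (hFi t) (hFi s)
    have ha := sx_inner_adj hU s (-t) (F t) (F s)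
    rw [← sub_eq_add_neg] at ha
    rw [hpl] at hi
    have hroot : ∀ t, (∫ x, ‖F t x‖ ^ p) ^ (1 / p) ≤ m t ^ (1 / p) := fun t =>
      Real.rpow_le_rpow (integral_nonneg fun x => by positivity) (hFm t) (by positivity)
    have hpos := hE0 s hs
    have hpot := hE0 t ht
    have he : ∀ u, 0 < m u → m u ^ ((Q - 4) / 2) * m u ^ (1 / p) =
        m u ^ ((Q - 1) * (Q - 2) / (2 * Q)) := by
      intro u hu
      rw [← Real.rpow_add hu, hp]
      congr 1
      field_simp
      ring
    simp only [hφ, Set.indicator_of_mem hs, Set.indicator_of_mem ht]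
    rw [← ENNReal.ofReal_mul (by positivity), ← ENNReal.ofReal_mul (by positivity),
      ← ENNReal.ofReal_mul (by positivity), ← ofReal_norm]
    refine ENNReal.ofReal_le_ofReal ?_
    simp only [hW]
    rw [inner_smul_left, inner_smul_right, ha, norm_mul, norm_mul, Complex.conj_ofReal,
      Complex.norm_real, Complex.norm_real, Real.norm_of_nonneg (by positivity),
      Real.norm_of_nonneg (by positivity), ← he s hpos, ← he t hpot]
    have hi2 : ‖inner ℂ (F s) (U (s - t) (F t))‖ ≤
        4 * |s - t| ^ (-l) * (m t ^ (1 / p) * m s ^ (1 / p)) := by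
      refine hi.trans ?_
      have := integral_nonneg (μ := volume) (f := fun x => ‖F s x‖ ^ p) fun x => by positivity
      have := hroot t
      have := hroot s
      gcongr
    calc _ ≤ m s ^ ((Q - 4) / 2) * (m t ^ ((Q - 4) / 2) *
          (4 * |s - t| ^ (-l) * (m t ^ (1 / p) * m s ^ (1 / p)))) := by gcongr
      _ = _ := by ring
  have h3 : ENNReal.ofReal (‖V‖ ^ 2) ≤ ENNReal.ofReal (8 * K * A ^ (2 - l)) := by
    have e1 : ENNReal.ofReal (‖V‖ ^ 2) = ‖inner ℂ V V‖ₑ := by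
      rw [← ofReal_norm, inner_self_eq_norm_sq_to_K]
      simp
    calc ENNReal.ofReal (‖V‖ ^ 2) = ‖∫ t in E, inner ℂ V (W t)‖ₑ := by
          rw [e1, integral_inner hWi]
      _ ≤ ∫⁻ s in E, ‖inner ℂ V (W s)‖ₑ := enorm_integral_le_lintegral_enorm _
      _ ≤ ∫⁻ s in E, ∫⁻ t in E, ENNReal.ofReal 4 * (φ s * φ t * ENNReal.ofReal (|s - t| ^ (-l))) := by
          refine setLIntegral_mono' hEm fun s hs => ?_
          have e2 : ‖inner ℂ V (W s)‖ₑ = ‖∫ t in E, inner ℂ (W s) (W t)‖ₑ := by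
            rw [integral_inner hWi, ← ofReal_norm, ← ofReal_norm, norm_inner_symm]
          rw [e2]
          refine (enorm_integral_le_lintegral_enorm _).trans ?_
          refine lintegral_mono_ae ?_
          have hne : ∀ᵐ t : ℝ ∂(volume.restrict E), t ≠ s := ae_restrict_of_ae (by
            simp [ae_iff])
          filter_upwards [ae_restrict_mem hEm, hne] with t ht hts
          exact hquad s hs t ht hts.symm
      _ ≤ ∫⁻ s, ∫⁻ t, ENNReal.ofReal 4 * (φ s * φ t * ENNReal.ofReal (|s - t| ^ (-l))) :=
          (setLIntegral_le_lintegral _ _).trans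
            (lintegral_mono fun s => setLIntegral_le_lintegral _ _)
      _ = ENNReal.ofReal 4 * ∫⁻ s, ∫⁻ t, φ s * φ t * ENNReal.ofReal (|s - t| ^ (-l)) := by
          rw [← lintegral_const_mul' _ _ ENNReal.ofReal_ne_top]
          congr 1
          funext s
          rw [← lintegral_const_mul' _ _ ENNReal.ofReal_ne_top]
      _ ≤ ENNReal.ofReal 4 * (2 * ENNReal.ofReal K * (ENNReal.ofReal A) ^ (2 - l)) := by
          have := sx_hls hl0 hl1 hφm hφf (by rw [hφA]; exact ENNReal.ofReal_ne_top)
          rw [hφA] at this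
          gcongr
      _ = ENNReal.ofReal (8 * K * A ^ (2 - l)) := by
          rw [ENNReal.ofReal_rpow_of_nonneg hA0 (by linarith),
            show (2 : ℝ≥0∞) = ENNReal.ofReal 2 by simp,
            ← ENNReal.ofReal_mul (by norm_num), ← ENNReal.ofReal_mul (by positivity),
            ← ENNReal.ofReal_mul (by norm_num)]
          congr 1; ring
  have h4 : ‖V‖ ^ 2 ≤ 8 * K * A ^ (2 - l) := by
    rwa [ENNReal.ofReal_le_ofReal_iff (by positivity)] at h3
  rw [hAl]
  refine ENNReal.ofReal_le_ofReal ?_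
  rcases hA0.eq_or_lt with h | hApos
  · rw [← h]; positivity
  have h5 : A ^ 2 ≤ ‖f‖ ^ 2 * (8 * K * A ^ (2 - l)) := by
    calc A ^ 2 ≤ (‖f‖ * ‖V‖) ^ 2 := by gcongr
      _ = ‖f‖ ^ 2 * ‖V‖ ^ 2 := by ring
      _ ≤ _ := by gcongr
  have h6 : A ^ l ≤ 8 * K * ‖f‖ ^ 2 := by
    have h7 : A ^ 2 = A ^ l * A ^ (2 - l) := by
      rw [← Real.rpow_add hApos, ← Real.rpow_natCast]; congr 1; push_cast; ring
    rw [h7] at h5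
    have : 0 < A ^ (2 - l) := Real.rpow_pos_of_pos hApos _
    refine le_of_mul_le_mul_right (h5.trans (le_of_eq ?_)) this
    ring
  calc A = (A ^ l) ^ (Q / 2) := by
        rw [← Real.rpow_mul hA0, show l * (Q / 2) = 1 by rw [hl]; field_simp, Real.rpow_one]
    _ ≤ _ := Real.rpow_le_rpow (by positivity) h6 (by positivity)


lemma sx_tm_tendsto {s ρ : ℝ} (hs : 0 < s) (hρ : ρ = s + 2) (F : Lp ℂ 2 (volume : Measure E2)) :
    Filter.Tendsto (fun n : ℕ => ENNReal.ofReal (sxTM n s F)) Filter.atTop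
      (nhds (∫⁻ x, ‖F x‖ₑ ^ ρ)) := by
  have hm : Measurable F := (Lp.stronglyMeasurable F).measurable
  have e : ∀ n : ℕ, ENNReal.ofReal (sxTM n s F) =
      ∫⁻ x, ENNReal.ofReal ((min ‖F x‖ n) ^ s * ‖F x‖ ^ 2) := by
    intro n
    rw [sxTM, ofReal_integral_eq_lintegral_ofReal (sxTM_int n.cast_nonneg hs F)]
    refine Filter.Eventually.of_forall fun x => ?_
    have : 0 ≤ min ‖F x‖ n := le_min (norm_nonneg _) n.cast_nonneg
    positivity
  simp_rw [e]
  refine lintegral_tendsto_of_tendsto_of_monotone (fun n => ?_) ?_ ?_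
  · exact (((hm.norm.min measurable_const).pow_const s).mul
      (hm.norm.pow_const 2)).ennreal_ofReal.aemeasurable
  · refine Filter.Eventually.of_forall fun x a b hab => ENNReal.ofReal_le_ofReal ?_
    have h0 : 0 ≤ min ‖F x‖ a := le_min (norm_nonneg _) a.cast_nonneg
    have := Real.rpow_le_rpow h0 (min_le_min_left ‖F x‖ (Nat.cast_le.2 hab : (a : ℝ) ≤ b)) hs.le
    gcongr
  · refine Filter.Eventually.of_forall fun x => ?_
    refine tendsto_const_nhds.congr' ?_
    obtain ⟨N, hN⟩ := exists_nat_ge ‖F x‖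
    filter_upwards [Filter.eventually_ge_atTop N] with n hn
    have h1 : ‖F x‖ ≤ n := hN.trans (Nat.cast_le.2 hn)
    rw [min_eq_left h1, ← ofReal_norm, ENNReal.ofReal_rpow_of_nonneg (norm_nonneg _) (by linarith)]
    congr 1
    rcases (norm_nonneg (F x)).eq_or_lt with h | h
    · rw [← h, Real.zero_rpow (by linarith), Real.zero_rpow hs.ne', zero_mul]
    · rw [hρ, Real.rpow_add h, ← Real.rpow_natCast ‖F x‖ 2]; norm_num

lemma sx_main (hU : SxProp U) {Q ρ : ℝ} (hQ : 2 < Q) (hρ : ρ = 2 * Q / (Q - 2))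
    (f : Lp ℂ 2 (volume : Measure E2)) :
    ∫⁻ t, (∫⁻ x, ‖U t f x‖ₑ ^ ρ) ^ ((Q - 2) / 2) ≤
      ENNReal.ofReal ((8 * (2 / (1 - 2 / Q) + 2 ^ (2 / Q / 2)) * ‖f‖ ^ 2) ^ (Q / 2)) := by
  have hQ2 : 0 < Q - 2 := by linarith
  set s : ℝ := 4 / (Q - 2) with hs'
  have hs : 0 < s := by positivity
  have hρs : ρ = s + 2 := by rw [hρ, hs']; field_simp; ring
  have hp : 2 * Q / (Q + 2) = 2 - s / (s + 1) := by
    have : s + 1 = (Q + 2) / (Q - 2) := by rw [hs']; field_simp; ring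
    rw [this, hs']; field_simp; ring
  have ha : 0 < (Q - 2) / 2 := by positivity
  set m : ℕ → ℝ → ℝ := fun n t => sxTM n s (U t f) with hm
  have hmc : ∀ n, Continuous (m n) := fun n => (sxTM_cont n.cast_nonneg hs).comp (sx_cont hU f)
  set E : ℕ → Set ℝ := fun n => Set.Icc (-(n : ℝ)) n ∩ {t | 1 / ((n : ℝ) + 1) ≤ m n t} with hE
  have hEc : ∀ n, IsCompact (E n) := fun n =>
    isCompact_Icc.inter_right (isClosed_le continuous_const (hmc n))
  have hE0 : ∀ n, ∀ t ∈ E n, 0 < m n t := fun n t ht =>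
    lt_of_lt_of_le (by positivity) ht.2
  set g : ℕ → ℝ → ℝ≥0∞ := fun n => (E n).indicator fun t => ENNReal.ofReal (m n t ^ ((Q - 2) / 2))
    with hg
  have hgm : ∀ n, Measurable (g n) := fun n =>
    (((hmc n).measurable.pow_const _).ennreal_ofReal).indicator (hEc n).measurableSet
  have hgb : ∀ n, ∫⁻ t, g n t ≤
      ENNReal.ofReal ((8 * (2 / (1 - 2 / Q) + 2 ^ (2 / Q / 2)) * ‖f‖ ^ 2) ^ (Q / 2)) := by
    intro n
    rw [hg, lintegral_indicator (hEc n).measurableSet]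
    exact sx_core hU hQ f (fun t => sxGL n.cast_nonneg hs (U t f))
      ((sxGL_cont _ hs).comp (sx_cont hU f)) (m n) (hmc n)
      (fun t => sxTM_inner _ hs _) (fun t => (sxTM_pow _ hs hp _).1)
      (fun t => (sxTM_pow _ hs hp _).2) (E n) (hEc n) (hE0 n)
  have hlim : ∀ t, (∫⁻ x, ‖U t f x‖ₑ ^ ρ) ^ ((Q - 2) / 2) ≤
      Filter.liminf (fun n => g n t) Filter.atTop := by
    intro t
    have hT := sx_tm_tendsto hs hρs (U t f)
    set L := ∫⁻ x, ‖U t f x‖ₑ ^ ρ with hL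
    rcases eq_or_ne L 0 with h0 | h0
    · rw [h0, ENNReal.zero_rpow_of_pos ha]; exact zero_le
    have hz : Filter.Tendsto (fun n : ℕ => ENNReal.ofReal (1 / ((n : ℝ) + 1))) Filter.atTop
        (nhds 0) := by
      have := ENNReal.tendsto_ofReal (tendsto_one_div_add_atTop_nhds_zero_nat (𝕜 := ℝ))
      rwa [ENNReal.ofReal_zero] at this
    have hev := hz.eventually_lt hT (pos_iff_ne_zero.2 h0)
    obtain ⟨N, hN⟩ := exists_nat_ge |t|
    refine le_of_eq (Filter.Tendsto.liminf_eq ?_).symm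
    refine ((ENNReal.continuous_rpow_const.tendsto L).comp hT).congr' ?_
    filter_upwards [hev, Filter.eventually_ge_atTop N] with n hn hnN
    have htE : t ∈ E n := by
      refine ⟨abs_le.1 (hN.trans (Nat.cast_le.2 hnN)), ?_⟩
      exact (ENNReal.ofReal_lt_ofReal_iff'.1 hn).1.le
    simp only [hg, Set.indicator_of_mem htE, Function.comp]
    exact ENNReal.ofReal_rpow_of_nonneg (hE0 n t htE).le ha.le
  calc _ ≤ ∫⁻ t, Filter.liminf (fun n => g n t) Filter.atTop := lintegral_mono hlim
    _ ≤ Filter.liminf (fun n => ∫⁻ t, g n t) Filter.atTop := lintegral_liminf_le hgm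
    _ ≤ _ := by
      refine (Filter.liminf_le_liminf (Filter.Eventually.of_forall hgb)).trans ?_
      rw [Filter.liminf_const]

lemma sx_final (hU : SxProp U) (q r : ℝ≥0∞) (hq : 2 < q) (hqr : 1 / q + 1 / r = 1 / 2) :
      ∃ C : ℝ, 0 < C ∧ ∀ f : Lp ℂ 2 (volume : Measure E2),
        mixedNorm q r (fun t => (U t f : E2 → ℂ))
          ≤ ENNReal.ofReal C * eLpNorm (f : E2 → ℂ) 2 volume := by
  simp only [one_div] at hqr
  have hen : ∀ f : Lp ℂ 2 (volume : Measure E2),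
      eLpNorm (f : E2 → ℂ) 2 volume = ENNReal.ofReal ‖f‖ := by
    intro f
    rw [Lp.norm_def, ENNReal.ofReal_toReal (Lp.eLpNorm_ne_top f)]
  by_cases hqt : q = ⊤
  · refine ⟨1, one_pos, fun f => ?_⟩
    rw [hqt, ENNReal.inv_top, zero_add, inv_inj] at hqr
    rw [mixedNorm, if_pos hqt, hqr, ENNReal.ofReal_one, one_mul]
    refine essSup_le_of_ae_le _ (Filter.Eventually.of_forall fun t => ?_)
    simp only [hen, LinearIsometry.norm_map]
    exact le_rfl
  have hr0 : r ≠ 0 := by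
    rintro rfl
    rw [ENNReal.inv_zero, add_top] at hqr
    exact absurd hqr.symm (ENNReal.inv_ne_top.2 two_ne_zero)
  have hrt : r ≠ ⊤ := by
    rintro rfl
    rw [ENNReal.inv_top, add_zero, inv_inj] at hqr
    exact hq.ne' hqr
  have hq0 : q ≠ 0 := (zero_le.trans_lt hq).ne'
  set Q := q.toReal with hQd
  set ρ := r.toReal with hρd
  have hQ : 2 < Q := by
    have := (ENNReal.toReal_lt_toReal (by norm_num) hqt).2 hq
    simpa using this
  have hρ0 : 0 < ρ := ENNReal.toReal_pos hr0 hrt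
  have hrel : Q⁻¹ + ρ⁻¹ = 2⁻¹ := by
    have := congrArg ENNReal.toReal hqr
    rw [ENNReal.toReal_add (by simpa using hq0) (by simpa using hr0)] at this
    simpa [ENNReal.toReal_inv] using this
  have hQ0 : 0 < Q := by linarith
  have hQ2 : 0 < Q - 2 := by linarith
  have hρ : ρ = 2 * Q / (Q - 2) := by
    field_simp at hrel
    rw [eq_div_iff hQ2.ne']
    linarith
  set K : ℝ := 8 * (2 / (1 - 2 / Q) + 2 ^ (2 / Q / 2)) with hK
  have hK0 : 0 < K := by
    have : 2 / Q < 1 := by rw [div_lt_one hQ0]; exact hQ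
    have : 0 < 1 - 2 / Q := by linarith
    positivity
  refine ⟨K ^ (1 / 2 : ℝ), by positivity, fun f => ?_⟩
  rw [mixedNorm, if_neg hqt, hen]
  have h1 : ∫⁻ t, eLpNorm (U t f) r volume ^ Q ≤ ENNReal.ofReal ((K * ‖f‖ ^ 2) ^ (Q / 2)) := by
    refine le_trans (le_of_eq ?_) (sx_main hU hQ hρ f)
    congr 1
    funext t
    rw [eLpNorm_eq_lintegral_rpow_enorm_toReal hr0 hrt, ← ENNReal.rpow_mul]
    congr 1
    rw [← hρd, hρ]
    field_simp
  calc _ ≤ ENNReal.ofReal ((K * ‖f‖ ^ 2) ^ (Q / 2)) ^ (1 / Q) := by gcongr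
    _ = _ := by
      rw [ENNReal.ofReal_rpow_of_nonneg (by positivity) (by positivity),
        ← ENNReal.ofReal_mul (by positivity), ← Real.rpow_mul (by positivity)]
      congr 1
      rw [show Q / 2 * (1 / Q) = 1 / 2 by field_simp, Real.mul_rpow hK0.le (by positivity),
        ← Real.sqrt_eq_rpow, ← Real.sqrt_eq_rpow, Real.sqrt_sq (norm_nonneg _)]


end SxAux

/-- **Strichartz estimates for the Schrödinger equation on `ℝ²`.**
Here the propagator `e^{itΔ}` is formalized as any family `U t` of linear isometries of
`L²(ℝ²)` which, on Schwartz functions, is given by the Fourier formula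
`e^{itΔ} f (x) = ∫ e^{-4π² i t |ξ|²} 𝓕f(ξ) e^{2πi x·ξ} dξ`; by density this determines
`U t` uniquely.  For every pair of exponents `(q, r)` with `2 < q ≤ ∞` and
`1/q + 1/r = 1/2` there is a constant `C = C_{q,r} > 0` such that
`‖e^{itΔ} f‖_{L^q_t L^r_x(ℝ×ℝ²)} ≤ C ‖f‖_{L²(ℝ²)}` for all `f ∈ L²(ℝ²)`. -/
theorem strichartz_estimates
    (U : ℝ → (Lp ℂ 2 (volume : Measure E2) →ₗᵢ[ℂ] Lp ℂ 2 (volume : Measure E2)))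
    (hU : ∀ (t : ℝ) (f : 𝓢(E2, ℂ)) (g : Lp ℂ 2 (volume : Measure E2)),
      (g : E2 → ℂ) =ᵐ[volume] ⇑f →
      (U t g : E2 → ℂ) =ᵐ[volume] fun x : E2 =>
        ∫ ξ : E2, Complex.exp (Complex.I *
            ((2 * Real.pi * ⟪x, ξ⟫ - 4 * Real.pi ^ 2 * t * ‖ξ‖ ^ 2 : ℝ) : ℂ)) * 𝓕 (⇑f) ξ) :
    ∀ q r : ℝ≥0∞, 2 < q → 1 / q + 1 / r = 1 / 2 →
      ∃ C : ℝ, 0 < C ∧ ∀ f : Lp ℂ 2 (volume : Measure E2),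
        mixedNorm q r (fun t => (U t f : E2 → ℂ))
          ≤ ENNReal.ofReal C * eLpNorm (f : E2 → ℂ) 2 volume := by
  intro q r hq hqr
  exact sx_final (U := U) hU q r hq hqr
end
end

section
/- Let P and P' be Fourier multipliers with symbols φ, φ' ∈ C_c^∞(ℝ²), with φ' not identically zero. Suppose there exists C > 0 such that Σ_{n∈ℤ} ‖(e^{inΔ} P f)(e^{inΔ} P' g)‖_{L^∞(ℝ²)} ≤ C ‖f‖_{L²(ℝ²)} ‖g‖_{L²(ℝ²)} for all Schwartz f, g. Then there exists C' > 0 such that for every Schwartz function f, (Σ_{n∈ℤ} ‖e^{inΔ} P f‖_{L^∞(ℝ²)}²)^{1/2} ≤ C' ‖f‖_{L²(ℝ²)}. -/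
open MeasureTheory Complex FourierTransform RealInnerProductSpace SchwartzMap
open scoped ENNReal

noncomputable section

open scoped ComplexConjugate

/-- symbol of the dual packet -/
def chiFun (φ : E2 → ℂ) (t : ℝ) (x ξ : E2) : ℂ :=
  conj (φ ξ) * Complex.exp (Complex.I *
      ((4 * Real.pi ^ 2 * t * ‖ξ‖ ^ 2 - 2 * Real.pi * ⟪x, ξ⟫ : ℝ) : ℂ))

lemma chiFun_contDiff {φ : E2 → ℂ} (hφ : IsCinfc φ) (t : ℝ) (x : E2) :
    ContDiff ℝ (⊤ : ℕ∞) (chiFun φ t x) := by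
  unfold chiFun
  refine ContDiff.mul (Complex.conjCLE.contDiff.comp hφ.1) ?_
  refine ContDiff.cexp (contDiff_const.mul (Complex.ofRealCLM.contDiff.comp ?_))
  refine ContDiff.sub (contDiff_const.mul (contDiff_norm_sq ℝ)) ?_
  exact contDiff_const.mul (contDiff_const.inner ℝ contDiff_id)

lemma chiFun_compact {φ : E2 → ℂ} (hφ : IsCinfc φ) (t : ℝ) (x : E2) :
    HasCompactSupport (chiFun φ t x) := by
  unfold chiFun
  exact HasCompactSupport.mul_right (hφ.2.comp_left (g := fun z : ℂ => conj z) (map_zero _))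

lemma chiFun_norm (φ : E2 → ℂ) (t : ℝ) (x ξ : E2) : ‖chiFun φ t x ξ‖ = ‖φ ξ‖ := by
  unfold chiFun
  rw [norm_mul, mul_comm Complex.I, Complex.norm_exp_ofReal_mul_I]
  simp

def chiS {φ : E2 → ℂ} (hφ : IsCinfc φ) (t : ℝ) (x : E2) : 𝓢(E2, ℂ) :=
  (chiFun_compact hφ t x).toSchwartzMap (chiFun_contDiff hφ t x)

def packet {φ : E2 → ℂ} (hφ : IsCinfc φ) (t : ℝ) (x : E2) : 𝓢(E2, ℂ) := 𝓕⁻ (chiS hφ t x)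

lemma conj_packet {φ : E2 → ℂ} (hφ : IsCinfc φ) (t : ℝ) (x y : E2) :
    conj (packet hφ t x y) = schrodingerKernel φ t (x - y) := by
  unfold packet schrodingerKernel
  rw [SchwartzMap.fourierInv_coe, Real.fourierInv_eq', ← integral_conj]
  congr 1
  ext ξ
  change conj (_ • chiFun φ t x ξ) = _
  unfold chiFun
  simp only [smul_eq_mul, map_mul, ← Complex.exp_conj, Complex.conj_conj, Complex.conj_I,
    Complex.conj_ofReal]
  rw [mul_left_comm, ← Complex.exp_add]
  congr 2
  rw [inner_sub_left, real_inner_comm y ξ]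
  push_cast
  ring

/-- the common squared `L²` norm -/
def mass {φ : E2 → ℂ} (hφ : IsCinfc φ) : ℝ := ‖(chiS hφ 0 0).toLp 2 volume‖ 

lemma norm_packet {φ : E2 → ℂ} (hφ : IsCinfc φ) (t : ℝ) (x : E2) :
    ‖(packet hφ t x).toLp 2 volume‖ = mass hφ := by
  have h := SchwartzMap.norm_fourier_toL2_eq (packet hφ t x)
  rw [← h]
  unfold packet mass
  rw [FourierTransform.fourier_fourierInv_eq, SchwartzMap.norm_toLp, SchwartzMap.norm_toLp]
  congr 1
  apply eLpNorm_congr_norm_ae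
  refine Filter.Eventually.of_forall fun ξ => ?_
  change ‖chiFun φ t x ξ‖ = ‖chiFun φ 0 0 ξ‖
  rw [chiFun_norm, chiFun_norm]

lemma continuous_le_eLpNorm_top {F : E2 → ℂ} (hF : Continuous F) (x : E2) :
    ‖F x‖ₑ ≤ eLpNorm F ⊤ volume := by
  have h : ∀ᵐ y ∂(volume : Measure E2), ‖F y‖ₑ ≤ eLpNorm F ⊤ volume := by
    rw [eLpNorm_exponent_top]; exact ae_le_eLpNormEssSup
  have hd : Dense {y | ‖F y‖ₑ ≤ eLpNorm F ⊤ volume} := Measure.dense_of_ae h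
  have hc : IsClosed {y | ‖F y‖ₑ ≤ eLpNorm F ⊤ volume} :=
    isClosed_le hF.enorm continuous_const
  have := hc.closure_eq ▸ hd.closure_eq
  have hx : x ∈ {y | ‖F y‖ₑ ≤ eLpNorm F ⊤ volume} := by
    rw [this]; exact Set.mem_univ x
  exact hx

lemma mass_pos {φ : E2 → ℂ} (hφ : IsCinfc φ) (h0 : φ ≠ 0) : 0 < mass hφ := by
  unfold mass
  rw [norm_pos_iff]
  intro h
  apply h0
  have h1 : chiS hφ 0 0 = 0 := by
    apply SchwartzMap.injective_toLp 2 volume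
    exact h.trans (map_zero (SchwartzMap.toLpCLM ℂ ℂ 2 (volume : Measure E2))).symm
  ext ξ
  have : chiFun φ 0 0 ξ = 0 := DFunLike.congr_fun h1 ξ
  have h2 := chiFun_norm φ 0 0 ξ
  rw [this] at h2
  simpa using h2.symm

lemma prop_eq_inner {φ : E2 → ℂ} (hφ : IsCinfc φ) (t : ℝ) (f : 𝓢(E2, ℂ)) (x : E2) :
    schrodingerProp φ t f x =
      inner ℂ ((packet hφ t x).toLp 2 volume) (f.toLp 2 volume) := by
  rw [SchwartzMap.inner_toL2_toL2_eq (packet hφ t x) f volume]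
  unfold schrodingerProp
  congr 1
  ext y
  rw [← conj_packet hφ]
  simp [mul_comm]

lemma prop_continuous {φ : E2 → ℂ} (hφ : IsCinfc φ) (t : ℝ) (f : 𝓢(E2, ℂ)) :
    Continuous (fun x => schrodingerProp φ t f x) := by
  have hK : ∀ z, schrodingerKernel φ t z = conj (packet hφ t 0 (-z)) := by
    intro z; rw [conj_packet]; simp
  have hKc : Continuous (schrodingerKernel φ t) := by
    rw [funext hK]
    exact Complex.continuous_conj.comp ((packet hφ t 0).continuous.comp continuous_neg)
  unfold schrodingerProp
  refine continuous_of_dominated (bound := fun y => (SchwartzMap.seminorm ℝ 0 0 (packet hφ t 0)) * ‖f y‖) ?_ ?_ ?_ ?_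
  · intro x
    exact ((hKc.comp (continuous_const.sub continuous_id)).mul f.continuous).aestronglyMeasurable
  · intro x
    refine Filter.Eventually.of_forall fun y => ?_
    rw [norm_mul, hK]
    gcongr
    rw [RCLike.norm_conj]
    exact SchwartzMap.norm_le_seminorm ℝ _ _
  · exact f.integrable.norm.const_mul _
  · refine Filter.Eventually.of_forall fun y => ?_
    exact (hKc.comp (continuous_id.sub continuous_const)).mul continuous_const

/-- signs -/
def sgn (T : Finset ℤ) (n : ℤ) : ℂ := if n ∈ T then 1 else -1

lemma sgn_sum_insert {V : Type*} [AddCommGroup V] [Module ℂ V] (v : ℤ → V) {a : ℤ}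
    {S T : Finset ℤ} (ha : a ∉ S) :
    ∑ n ∈ S, sgn (insert a T) n • v n = ∑ n ∈ S, sgn T n • v n := by
  refine Finset.sum_congr rfl fun n hn => ?_
  have : n ≠ a := fun h => ha (h ▸ hn)
  simp [sgn, this]

lemma signs_sq {V : Type*} [NormedAddCommGroup V] [InnerProductSpace ℂ V] (v : ℤ → V)
    (S : Finset ℤ) :
    ∑ T ∈ S.powerset, ‖∑ n ∈ S, sgn T n • v n‖ ^ 2 = 2 ^ S.card * ∑ n ∈ S, ‖v n‖ ^ 2 := by
  induction S using Finset.induction_on with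
  | empty => simp
  | insert a S ha ih =>
    rw [Finset.sum_powerset_insert ha, ← Finset.sum_add_distrib]
    have : ∀ T ∈ S.powerset, ‖∑ n ∈ insert a S, sgn T n • v n‖ ^ 2 +
        ‖∑ n ∈ insert a S, sgn (insert a T) n • v n‖ ^ 2 =
        2 * (‖∑ n ∈ S, sgn T n • v n‖ ^ 2) + 2 * ‖v a‖ ^ 2 := by
      intro T hT
      have haT : a ∉ T := fun h => ha (Finset.mem_powerset.1 hT h)
      rw [Finset.sum_insert ha, Finset.sum_insert ha, sgn_sum_insert v ha]
      have h1 : sgn T a = -1 := by simp [sgn, haT]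
      have h2 : sgn (insert a T) a = 1 := by simp [sgn]
      rw [h1, h2, one_smul, neg_one_smul]
      have := parallelogram_law_with_norm ℂ (∑ n ∈ S, sgn T n • v n) (v a)
      rw [neg_add_eq_sub, add_comm (v a)]
      linarith
    rw [Finset.sum_congr rfl this, Finset.sum_add_distrib, ← Finset.mul_sum, ih,
      Finset.sum_insert ha, Finset.card_insert_of_notMem ha]
    simp
    ring

lemma signs_abs (z : ℤ → ℂ) (S : Finset ℤ) {a : ℤ} (haS : a ∈ S) :
    2 ^ S.card * ‖z a‖ ≤ ∑ T ∈ S.powerset, ‖∑ n ∈ S, sgn T n • z n‖ := by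
  obtain ⟨S, ha, rfl⟩ : ∃ S', a ∉ S' ∧ insert a S' = S :=
    ⟨S.erase a, by simp, Finset.insert_erase haS⟩
  rw [Finset.sum_powerset_insert ha, ← Finset.sum_add_distrib]
  have : ∀ T ∈ S.powerset, 2 * ‖z a‖ ≤ ‖∑ n ∈ insert a S, sgn T n • z n‖ +
        ‖∑ n ∈ insert a S, sgn (insert a T) n • z n‖ := by
    intro T hT
    have haT : a ∉ T := fun h => ha (Finset.mem_powerset.1 hT h)
    rw [Finset.sum_insert ha, Finset.sum_insert ha, sgn_sum_insert z ha]
    have h1 : sgn T a = -1 := by simp [sgn, haT]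
    have h2 : sgn (insert a T) a = 1 := by simp [sgn]
    rw [h1, h2, one_smul, neg_one_smul]
    set w := ∑ n ∈ S, sgn T n • z n
    have := norm_sub_le (z a + w) (-z a + w)
    have e : z a + w - (-z a + w) = 2 * z a := by ring
    rw [e, norm_mul] at this
    simp at this
    linarith
  refine le_trans ?_ (Finset.sum_le_sum this)
  rw [Finset.card_insert_of_notMem ha]
  simp
  apply le_of_eq
  ring

/-- Abstract argument. -/
lemma abstract_bound {V : Type*} [NormedAddCommGroup V] [InnerProductSpace ℂ V]
    (S : Finset ℤ) (A : ℤ → ℝ) (hA : ∀ n, 0 ≤ A n) (g : ℤ → V) (m : ℝ) (hm : 0 < m)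
    (hg : ∀ n, ‖g n‖ = m) (D : ℝ) (hD : 0 ≤ D)
    (H : ∀ T : Finset ℤ, ∑ n ∈ S, A n * ‖inner ℂ (g n) (∑ k ∈ S, sgn T k • ((A k : ℂ) • g k))‖
      ≤ D * ‖∑ k ∈ S, sgn T k • ((A k : ℂ) • g k)‖) :
    ∑ n ∈ S, A n ^ 2 ≤ (D / m) ^ 2 := by
  set Q := ∑ n ∈ S, A n ^ 2 with hQ
  have hQ0 : 0 ≤ Q := Finset.sum_nonneg fun _ _ => sq_nonneg _
  set N : ℝ := 2 ^ S.card with hN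
  have hN0 : 0 < N := by positivity
  set v : ℤ → V := fun k => (A k : ℂ) • g k with hv
  have h1 : ∑ T ∈ S.powerset, ‖∑ k ∈ S, sgn T k • v k‖ ^ 2 = N * (m ^ 2 * Q) := by
    rw [signs_sq, hQ, Finset.mul_sum S _ (m ^ 2)]
    congr 1
    refine Finset.sum_congr rfl fun n _ => ?_
    rw [hv]
    simp only [norm_smul, hg, Complex.norm_real, Real.norm_eq_abs, mul_pow, sq_abs]
    ring
  have h2 : N * (m ^ 2 * Q) ≤ ∑ T ∈ S.powerset, ∑ n ∈ S,
      A n * ‖inner ℂ (g n) (∑ k ∈ S, sgn T k • v k)‖ := by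
    rw [Finset.sum_comm, hQ, Finset.mul_sum, Finset.mul_sum]
    refine Finset.sum_le_sum fun n hn => ?_
    rw [← Finset.mul_sum]
    have h3 := signs_abs (fun k => inner ℂ (g n) (v k)) S hn
    have h4 : ‖inner ℂ (g n) (v n)‖ = A n * m ^ 2 := by
      rw [hv]
      simp only [inner_smul_right, inner_self_eq_norm_sq_to_K, hg]
      simp [abs_of_nonneg (hA n), abs_of_pos hm]
    simp only [h4] at h3
    have h5 : ∀ T, inner ℂ (g n) (∑ k ∈ S, sgn T k • v k) =
        ∑ k ∈ S, sgn T k • inner ℂ (g n) (v k) := by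
      intro T
      simp [inner_sum, inner_smul_right]
    simp only [h5]
    calc N * (m ^ 2 * A n ^ 2) = A n * (N * (A n * m ^ 2)) := by ring
      _ ≤ _ := mul_le_mul_of_nonneg_left h3 (hA n)
  set B := ∑ T ∈ S.powerset, ‖∑ k ∈ S, sgn T k • v k‖ with hB
  have h6 : N * (m ^ 2 * Q) ≤ D * B := by
    refine h2.trans ?_
    rw [hB, Finset.mul_sum]
    exact Finset.sum_le_sum fun T _ => H T
  have h7 : B ^ 2 ≤ N * (N * (m ^ 2 * Q)) := by
    have := sq_sum_le_card_mul_sum_sq (s := S.powerset)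
      (f := fun T => ‖∑ k ∈ S, sgn T k • v k‖)
    rw [h1, Finset.card_powerset] at this
    push_cast at this
    exact this
  have h8 : (N * (m ^ 2 * Q)) ^ 2 ≤ D ^ 2 * (N * (N * (m ^ 2 * Q))) := by
    calc (N * (m ^ 2 * Q)) ^ 2 ≤ (D * B) ^ 2 := by gcongr
      _ = D ^ 2 * B ^ 2 := by ring
      _ ≤ _ := by gcongr
  rcases hQ0.eq_or_lt with h | h
  · rw [← h]; positivity
  · rw [div_pow, le_div_iff₀ (by positivity)]
    have hp : 0 < N ^ 2 * m ^ 2 * Q := by positivity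
    refine le_of_mul_le_mul_left ?_ hp
    nlinarith

lemma finite_bound {φ φ' : E2 → ℂ} (hφ : IsCinfc φ) (hφ' : IsCinfc φ') (h0 : φ' ≠ 0)
    {C : ℝ} (hC : 0 < C) (f : 𝓢(E2, ℂ))
    (H : ∀ g : 𝓢(E2, ℂ),
      (∑' n : ℤ,
          eLpNorm (fun x => schrodingerProp φ (n : ℝ) (⇑f) x *
            schrodingerProp φ' (n : ℝ) (⇑g) x) ⊤ volume)
        ≤ ENNReal.ofReal C * eLpNorm (⇑f) 2 volume * eLpNorm (⇑g) 2 volume)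
    (S : Finset ℤ) (x : ℤ → E2) :
    ∑ n ∈ S, ‖schrodingerProp φ (n : ℝ) f (x n)‖ ^ 2 ≤
      (C * ‖f.toLp 2 volume‖ / mass hφ') ^ 2 := by
  refine abstract_bound S (fun n => ‖schrodingerProp φ (n : ℝ) f (x n)‖) (fun _ => norm_nonneg _)
    (fun n => (packet hφ' (n : ℝ) (x n)).toLp 2 volume) (mass hφ') (mass_pos hφ' h0)
    (fun n => norm_packet hφ' _ _) (C * ‖f.toLp 2 volume‖) (by positivity) ?_
  intro T
  set G : 𝓢(E2, ℂ) := ∑ k ∈ S, sgn T k • ((‖schrodingerProp φ (k : ℝ) f (x k)‖ : ℂ) •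
    packet hφ' (k : ℝ) (x k)) with hG
  have hGe : ∑ k ∈ S, sgn T k • ((‖schrodingerProp φ (k : ℝ) f (x k)‖ : ℂ) •
    (packet hφ' (k : ℝ) (x k)).toLp 2 volume) = G.toLp 2 volume := by
    rw [← SchwartzMap.toLpCLM_apply (𝕜 := ℂ), hG, map_sum]
    simp only [map_smul, SchwartzMap.toLpCLM_apply]
  rw [hGe]
  simp only [← prop_eq_inner, ← norm_mul]
  have h1 := (ENNReal.sum_le_tsum S).trans (H G)
  have h2 : ∑ n ∈ S, ENNReal.ofReal ‖schrodingerProp φ (n : ℝ) f (x n) *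
      schrodingerProp φ' (n : ℝ) G (x n)‖ ≤
      ENNReal.ofReal (C * ‖f.toLp 2 volume‖ * ‖G.toLp 2 volume‖) := by
    rw [ENNReal.ofReal_mul (by positivity), ENNReal.ofReal_mul hC.le, SchwartzMap.norm_toLp,
      SchwartzMap.norm_toLp, ENNReal.ofReal_toReal (f.memLp 2 volume).2.ne,
      ENNReal.ofReal_toReal (G.memLp 2 volume).2.ne]
    refine le_trans (Finset.sum_le_sum fun n _ => ?_) h1
    rw [ofReal_norm]
    exact continuous_le_eLpNorm_top
      ((prop_continuous hφ (n : ℝ) f).mul (prop_continuous hφ' (n : ℝ) G)) (x n)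
  rw [← ENNReal.ofReal_sum_of_nonneg (fun _ _ => norm_nonneg _),
    ENNReal.ofReal_le_ofReal_iff (by positivity)] at h2
  exact h2

lemma exists_near_sup {φ : E2 → ℂ} (hφ : IsCinfc φ) (t : ℝ) (f : 𝓢(E2, ℂ)) :
    ∃ x, eLpNorm (fun x => schrodingerProp φ t f x) ⊤ volume ≤
      ENNReal.ofReal (2 * ‖schrodingerProp φ t f x‖) := by
  by_contra! h
  set c := eLpNorm (fun x => schrodingerProp φ t f x) ⊤ volume with hc
  have hfin : c ≠ ⊤ := by
    have : c ≤ ENNReal.ofReal (mass hφ * ‖f.toLp 2 volume‖) := by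
      rw [hc, eLpNorm_exponent_top]
      refine eLpNormEssSup_le_of_ae_bound (Filter.Eventually.of_forall fun x => ?_)
      rw [prop_eq_inner hφ, ← norm_packet hφ t x]
      exact norm_inner_le_norm _ _
    exact ne_top_of_le_ne_top ENNReal.ofReal_ne_top this
  have h1 : c ≤ ENNReal.ofReal (c.toReal / 2) := by
    conv_lhs => rw [hc, eLpNorm_exponent_top]
    refine eLpNormEssSup_le_of_ae_bound (Filter.Eventually.of_forall fun x => ?_)
    have := (ENNReal.ofReal_lt_iff_lt_toReal (by positivity) hfin).1 (h x)
    linarith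
  have h2 := h 0
  have hpos : 0 < c.toReal :=
    lt_of_le_of_lt (by positivity) ((ENNReal.ofReal_lt_iff_lt_toReal (by positivity) hfin).1 h2)
  have := ENNReal.toReal_le_of_le_ofReal (by positivity) h1
  linarith

/-- **From the discretized bilinear bound to the discretized linear bound.**
Let `φ'` be not identically zero.  If
`Σ_{n∈ℤ} ‖(e^{inΔ} P f)(e^{inΔ} P' g)‖_{L^∞(ℝ²)} ≤ C ‖f‖₂ ‖g‖₂` for all Schwartz `f, g`,
then there is `C' > 0` with
`(Σ_{n∈ℤ} ‖e^{inΔ} P f‖_{L^∞(ℝ²)}²)^{1/2} ≤ C' ‖f‖₂` for all Schwartz `f`. -/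
theorem discretized_linear_bound_from_bilinear
    (φ φ' : E2 → ℂ) (hφ : IsCinfc φ) (hφ' : IsCinfc φ') (hφ'0 : φ' ≠ 0)
    (H : ∃ C : ℝ, 0 < C ∧ ∀ f g : 𝓢(E2, ℂ),
      (∑' n : ℤ,
          eLpNorm (fun x => schrodingerProp φ (n : ℝ) (⇑f) x *
            schrodingerProp φ' (n : ℝ) (⇑g) x) ⊤ volume)
        ≤ ENNReal.ofReal C * eLpNorm (⇑f) 2 volume * eLpNorm (⇑g) 2 volume) :
    ∃ C' : ℝ, 0 < C' ∧ ∀ f : 𝓢(E2, ℂ),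
      (∑' n : ℤ,
          (eLpNorm (fun x => schrodingerProp φ (n : ℝ) (⇑f) x) ⊤ volume) ^ (2 : ℝ)) ^ (1 / 2 : ℝ)
        ≤ ENNReal.ofReal C' * eLpNorm (⇑f) 2 volume := by
  obtain ⟨C, hC, H⟩ := H
  have hm := mass_pos hφ' hφ'0
  refine ⟨2 * C / mass hφ', by positivity, fun f => ?_⟩
  choose x hx using fun n : ℤ => exists_near_sup hφ (n : ℝ) f
  have hR : ENNReal.ofReal (2 * C / mass hφ') * eLpNorm (⇑f) 2 volume =
      ENNReal.ofReal (2 * (C * ‖f.toLp 2 volume‖ / mass hφ')) := by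
    rw [show 2 * (C * ‖f.toLp 2 volume‖ / mass hφ') =
      2 * C / mass hφ' * ‖f.toLp 2 volume‖ by ring, ENNReal.ofReal_mul (by positivity),
      SchwartzMap.norm_toLp, ENNReal.ofReal_toReal (f.memLp 2 volume).2.ne]
  rw [hR, one_div, ENNReal.rpow_inv_le_iff (by norm_num), ENNReal.tsum_eq_iSup_sum]
  refine iSup_le fun S => ?_
  have hb := finite_bound hφ hφ' hφ'0 hC f (H f) S x
  calc _ ≤ ∑ n ∈ S, ENNReal.ofReal ((2 * ‖schrodingerProp φ (n : ℝ) f (x n)‖) ^ 2) := by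
        refine Finset.sum_le_sum fun n _ => ?_
        rw [ENNReal.ofReal_pow (by positivity), ENNReal.rpow_ofNat]
        gcongr
        exact hx n
    _ = ENNReal.ofReal (∑ n ∈ S, (2 * ‖schrodingerProp φ (n : ℝ) f (x n)‖) ^ 2) :=
        (ENNReal.ofReal_sum_of_nonneg (fun _ _ => by positivity)).symm
    _ ≤ _ := by
        rw [ENNReal.rpow_ofNat, ← ENNReal.ofReal_pow (by positivity)]
        apply ENNReal.ofReal_le_ofReal
        simp only [mul_pow, ← Finset.mul_sum]
        exact mul_le_mul_of_nonneg_left hb (by norm_num)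
end
end
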